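/- Let S ⊂ ℝ³ be the graph of a homogeneous function z(s,t) = r^m P(θ) of order m ≥ 2 with P ∈ C^∞(S¹), P > 0, z smooth on ℝ² \ {0}, and suppose m² P(θ)² + m P(θ) P''(θ) − (m−1) P'(θ)² > 0 for all θ outside a finite set {θ_1, …, θ_ℓ}. Assume the functions c_1(θ) = [z_st/√(z_tt z_ss − z_st²)]·(d/dθ) log(z_tt) and c_2(θ) = [z_st/√(z_tt z_ss − z_st²)]·(d/dθ) log(z_ss) are in L¹([0,2π]), and set b_1 = ∫_0^{2π} b(θ) dθ with b(θ) = √(z_tt z_ss − z_st²)/((m²−m) r^{m−2} P(θ)), and b_2 = −(1/4) ∫_0^{2π} (c_1(θ) − c_2(θ)) dθ. If b_1 − b_2 ∉ πℤ and (2m−1) b_1 − b_2 ∉ πℤ, then for every k ∈ ℕ there exist U^1, U^2 ∈ C^k(ℝ², ℝ³) such that the deformation of S with position vector R(s,t) + 2ε U^1(s,t) + 2ε² U^2(s,t), where R(s,t) = (s, t, z(s,t)), is a nontrivial infinitesimal bending of order 2. -/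

import Mathlib

open scoped BigOperators

noncomputable section

/-- Dot product of two 3-vectors (ℂ-bilinear extension when over ℂ). -/
def dot3 {R : Type*} [CommRing R] (v w : Fin 3 → R) : R :=
  v 0 * w 0 + v 1 * w 1 + v 2 * w 2

/-- Cross product of two 3-vectors (ℂ-bilinear extension when over ℂ). -/
def cross3 {R : Type*} [CommRing R] (v w : Fin 3 → R) : Fin 3 → R :=
  ![v 1 * w 2 - v 2 * w 1, v 2 * w 0 - v 0 * w 2, v 0 * w 1 - v 1 * w 0]

/-- Euclidean norm of a real 3-vector. -/
def enorm3 (v : Fin 3 → ℝ) : ℝ := Real.sqrt (dot3 v v)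

/-- Partial derivative with respect to the first variable `s`. -/
def pds {E : Type*} [NormedAddCommGroup E] [NormedSpace ℝ E]
    (f : ℝ × ℝ → E) (p : ℝ × ℝ) : E :=
  deriv (fun s => f (s, p.2)) p.1

/-- Partial derivative with respect to the second variable `t`. -/
def pdt {E : Type*} [NormedAddCommGroup E] [NormedSpace ℝ E]
    (f : ℝ × ℝ → E) (p : ℝ × ℝ) : E :=
  deriv (fun t => f (p.1, t)) p.2

/-- Componentwise `s`-derivative of a 3-vector valued map. -/
def vds (V : ℝ × ℝ → Fin 3 → ℝ) (p : ℝ × ℝ) : Fin 3 → ℝ := fun i => pds (fun q => V q i) p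

/-- Componentwise `t`-derivative of a 3-vector valued map. -/
def vdt (V : ℝ × ℝ → Fin 3 → ℝ) (p : ℝ × ℝ) : Fin 3 → ℝ := fun i => pdt (fun q => V q i) p

/-!
Write `P = exp (m p)`. A bending field whose vertical component is `r ^ μ * f θ` is determined by
`f`, and substituting `f = exp ((μ - 1) p) g` turns the bending equations into Hill's equation
`g'' + (1 + (μ - 1) (μ + m - 1) B) g = h`, where `B` is a positive multiple of the curvature
divided by `P ^ 2`. Since `B ≥ 0` does not vanish identically, the Prüfer angle of the homogeneous
equation increases without bound as `μ → ∞`, so the monodromy acquires the eigenvalue `1` for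
arbitrarily large `μ`; the corresponding periodic `g` gives a first-order field that is as smooth
as desired. The square of its differential is a sum of two homogeneous forms, for each of
which the second-order equation is again Hill's equation at one value of `μ`. If that value is
resonant, adding `log r` times a homogeneous solution supplies the solvability condition of the
Fredholm alternative; since `μ` is large, the logarithm does not affect the smoothness.
-/

section LinearODE

open Set Filter Topology intervalIntegral Function

variable {E : Type*} [NormedAddCommGroup E] [NormedSpace ℝ E]

/-- Bielecki's weight. In the sup norm of `u / bieleckiWeight κ`, the Picard operator of an equation
`y' = G t y` with `G t` Lipschitz of constant `κ t` is a `1/2`-contraction on the whole real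
line. -/
def bieleckiWeight (κ : ℝ → ℝ) (t : ℝ) : ℝ := Real.cosh (2 * ∫ τ in (0 : ℝ)..t, κ τ)

theorem one_le_bieleckiWeight (κ : ℝ → ℝ) (t : ℝ) : 1 ≤ bieleckiWeight κ t := Real.one_le_cosh _

theorem bieleckiWeight_pos (κ : ℝ → ℝ) (t : ℝ) : 0 < bieleckiWeight κ t := Real.cosh_pos _

theorem continuous_bieleckiWeight {κ : ℝ → ℝ} (hκ : Continuous κ) :
    Continuous (bieleckiWeight κ) :=
  Real.continuous_cosh.comp (continuous_const.mul
    (continuous_primitive (fun a b => hκ.intervalIntegrable a b) 0))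

theorem integral_mul_bieleckiWeight {κ : ℝ → ℝ} (hκ : Continuous κ) (t : ℝ) :
    ∫ τ in (0 : ℝ)..t, κ τ * bieleckiWeight κ τ = Real.sinh (2 * ∫ τ in (0 : ℝ)..t, κ τ) / 2 := by
  have hderiv (x : ℝ) : HasDerivAt (fun x => Real.sinh (2 * ∫ τ in (0 : ℝ)..x, κ τ) / 2)
      (κ x * bieleckiWeight κ x) x := by
    refine ((((hκ.integral_hasStrictDerivAt 0 x).hasDerivAt.const_mul 2).sinh).div_const
      2).congr_deriv ?_
    simp only [bieleckiWeight]
    ring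
  rw [integral_eq_sub_of_hasDerivAt (fun x _ => hderiv x)
    ((hκ.mul (continuous_bieleckiWeight hκ)).intervalIntegrable _ _)]
  simp

theorem norm_integral_le_bieleckiWeight {κ : ℝ → ℝ} (hκ : Continuous κ) {g : ℝ → E} {C : ℝ}
    (hC : 0 ≤ C) (hg : ∀ τ, ‖g τ‖ ≤ κ τ * (C * bieleckiWeight κ τ)) (t : ℝ) :
    ‖∫ τ in (0 : ℝ)..t, g τ‖ ≤ C / 2 * bieleckiWeight κ t := by
  have hsinh (x : ℝ) : |Real.sinh x| ≤ Real.cosh x := by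
    rw [← Real.cosh_abs, Real.abs_sinh]
    exact (Real.sinh_lt_cosh _).le
  calc ‖∫ τ in (0 : ℝ)..t, g τ‖
      ≤ |∫ τ in (0 : ℝ)..t, κ τ * (C * bieleckiWeight κ τ)| :=
        norm_integral_le_abs_of_norm_le (.of_forall hg)
          ((hκ.mul (continuous_const.mul (continuous_bieleckiWeight hκ))).intervalIntegrable _ _)
    _ = |C * ∫ τ in (0 : ℝ)..t, κ τ * bieleckiWeight κ τ| := by
        rw [← intervalIntegral.integral_const_mul]
        simp only [mul_left_comm]
    _ = C / 2 * |Real.sinh (2 * ∫ τ in (0 : ℝ)..t, κ τ)| := by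
        rw [integral_mul_bieleckiWeight hκ, abs_mul, abs_div, abs_of_nonneg hC, abs_two]
        ring
    _ ≤ C / 2 * bieleckiWeight κ t := by
        gcongr
        exact hsinh _

theorem norm_picard_le_bieleckiWeight {G : ℝ → E → E} {κ : ℝ → ℝ} (hκ : Continuous κ)
    (hG : ∀ t x, ‖G t x‖ ≤ κ t * (1 + ‖x‖)) {u : ℝ → E} {C : ℝ} (hC : 0 ≤ C)
    (hu : ∀ τ, ‖u τ‖ ≤ C * bieleckiWeight κ τ) (x₀ : E) (t : ℝ) :
    ‖ODE.picard G 0 x₀ u t‖ ≤ (‖x₀‖ + (1 + C) / 2) * bieleckiWeight κ t := by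
  have hκ₀ (τ : ℝ) : 0 ≤ κ τ := by simpa using (norm_nonneg _).trans (hG τ 0)
  have hint := norm_integral_le_bieleckiWeight hκ (C := 1 + C) (by positivity)
    (fun τ => (hG τ (u τ)).trans (mul_le_mul_of_nonneg_left
      (by linarith [hu τ, one_le_bieleckiWeight κ τ]) (hκ₀ τ))) t
  calc ‖ODE.picard G 0 x₀ u t‖ ≤ ‖x₀‖ + (1 + C) / 2 * bieleckiWeight κ t :=
        (norm_add_le _ _).trans (by gcongr)
    _ ≤ (‖x₀‖ + (1 + C) / 2) * bieleckiWeight κ t := by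
        nlinarith [norm_nonneg x₀, one_le_bieleckiWeight κ t]

theorem norm_picard_sub_picard_le_bieleckiWeight {G : ℝ → E → E} {κ : ℝ → ℝ} (hκ : Continuous κ)
    (hκ₀ : ∀ t, 0 ≤ κ t) (hG : Continuous ↿G) (hlip : ∀ t x y, ‖G t x - G t y‖ ≤ κ t * ‖x - y‖)
    {u v : ℝ → E} (hu : Continuous u) (hv : Continuous v) {C : ℝ} (hC : 0 ≤ C)
    (huv : ∀ τ, ‖u τ - v τ‖ ≤ C * bieleckiWeight κ τ) (x₀ : E) (t : ℝ) :
    ‖ODE.picard G 0 x₀ u t - ODE.picard G 0 x₀ v t‖ ≤ C / 2 * bieleckiWeight κ t := by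
  have hint {w : ℝ → E} (hw : Continuous w) :
      IntervalIntegrable (fun τ => G τ (w τ)) MeasureTheory.volume 0 t :=
    (hG.comp (continuous_id.prodMk hw)).intervalIntegrable _ _
  rw [ODE.picard_apply, ODE.picard_apply, add_sub_add_left_eq_sub,
    ← integral_sub (hint hu) (hint hv)]
  exact norm_integral_le_bieleckiWeight hκ hC (fun τ => (hlip τ _ _).trans
    (mul_le_mul_of_nonneg_left (huv τ) (hκ₀ τ))) t

theorem hasDerivAt_picard [CompleteSpace E] {G : ℝ → E → E} (hG : Continuous ↿G) {u : ℝ → E}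
    (hu : Continuous u) (x₀ : E) (t : ℝ) : HasDerivAt (ODE.picard G 0 x₀ u) (G t (u t)) t :=
  ((hG.comp (continuous_id.prodMk hu)).integral_hasStrictDerivAt 0 t).hasDerivAt.const_add x₀

theorem exists_picard_fixedPoint [CompleteSpace E] {G : ℝ → E → E} {κ : ℝ → ℝ}
    (hκ : Continuous κ) (hG : Continuous ↿G) (hgrowth : ∀ t x, ‖G t x‖ ≤ κ t * (1 + ‖x‖))
    (hlip : ∀ t x y, ‖G t x - G t y‖ ≤ κ t * ‖x - y‖) (x₀ : E) :
    ∃ y : ℝ → E, Continuous y ∧ ODE.picard G 0 x₀ y = y := by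
  have hκ₀ (t : ℝ) : 0 ≤ κ t := by simpa using (norm_nonneg _).trans (hgrowth t 0)
  set w := bieleckiWeight κ
  have hw : Continuous w := continuous_bieleckiWeight hκ
  have hw₀ (t : ℝ) : 0 < w t := bieleckiWeight_pos κ t
  have hnorm (t : ℝ) (x : E) : ‖w t • x‖ = ‖x‖ * w t := by
    rw [norm_smul, Real.norm_of_nonneg (hw₀ t).le, mul_comm]
  have hnorm_inv (t : ℝ) {x : E} {C : ℝ} (hx : ‖x‖ ≤ C * w t) : ‖(w t)⁻¹ • x‖ ≤ C := by
    rwa [norm_smul, norm_inv, Real.norm_of_nonneg (hw₀ t).le, inv_mul_le_iff₀' (hw₀ t)]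
  let T (u : BoundedContinuousFunction ℝ E) : ℝ → E := ODE.picard G 0 x₀ fun t => w t • u t
  have hT (u : BoundedContinuousFunction ℝ E) : Continuous (T u) :=
    continuous_iff_continuousAt.2 fun t =>
      (hasDerivAt_picard hG (hw.smul u.continuous) x₀ t).continuousAt
  let Φ (u : BoundedContinuousFunction ℝ E) : BoundedContinuousFunction ℝ E :=
    .ofNormedAddCommGroup (fun t => (w t)⁻¹ • T u t)
      ((hw.inv₀ fun t => (hw₀ t).ne').smul (hT u)) (‖x₀‖ + (1 + ‖u‖) / 2)
      fun t => hnorm_inv t (norm_picard_le_bieleckiWeight hκ hgrowth (norm_nonneg u) (fun τ => by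
        rw [hnorm]; exact mul_le_mul_of_nonneg_right (u.norm_coe_le_norm τ) (hw₀ τ).le) x₀ t)
  have hΦ : ContractingWith (1 / 2) Φ := by
    refine ⟨by norm_num, .of_dist_le_mul fun u v => ?_⟩
    refine (BoundedContinuousFunction.dist_le (by positivity)).2 fun t => ?_
    rw [dist_eq_norm, show Φ u t - Φ v t = (w t)⁻¹ • (T u t - T v t) from (smul_sub _ _ _).symm]
    refine hnorm_inv t ((norm_picard_sub_picard_le_bieleckiWeight hκ hκ₀ hG hlip
      (hw.smul u.continuous) (hw.smul v.continuous) dist_nonneg (fun τ => ?_) x₀ t).trans_eq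
      (by push_cast; ring))
    change ‖w τ • u τ - w τ • v τ‖ ≤ _
    rw [← smul_sub, hnorm, ← dist_eq_norm]
    exact mul_le_mul_of_nonneg_right (BoundedContinuousFunction.dist_coe_le_dist τ) (hw₀ τ).le
  obtain ⟨u, hu⟩ : ∃ u, Φ u = u := ⟨_, hΦ.fixedPoint_isFixedPt⟩
  have hTu : (fun t => w t • u t) = T u := by
    funext t
    conv_lhs => rw [← hu]
    exact smul_inv_smul₀ (hw₀ t).ne' _
  exact ⟨T u, hT u, congrArg (ODE.picard G 0 x₀) hTu.symm⟩

theorem exists_ODE_solution_of_lipschitz [CompleteSpace E] {G : ℝ → E → E} {κ : ℝ → ℝ}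
    (hκ : Continuous κ) (hκ₀ : ∀ t, 0 ≤ κ t) (hG : Continuous ↿G)
    (hlip : ∀ t x y, ‖G t x - G t y‖ ≤ κ t * ‖x - y‖) (x₀ : E) :
    ∃ y : ℝ → E, y 0 = x₀ ∧ ∀ t, HasDerivAt y (G t (y t)) t := by
  obtain ⟨y, hy, hfix⟩ := exists_picard_fixedPoint (G := G) (κ := fun t => κ t + ‖G t 0‖)
    (hκ.add (hG.comp (continuous_id.prodMk continuous_const)).norm) hG
    (fun t x => by
      have h := hlip t x 0
      rw [sub_zero] at h
      have h' := norm_le_norm_sub_add (G t x) (G t 0)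
      nlinarith [norm_nonneg x, norm_nonneg (G t 0), hκ₀ t])
    (fun t x y => (hlip t x y).trans (by gcongr; exact le_add_of_nonneg_right (norm_nonneg _))) x₀
  refine ⟨y, by rw [← hfix, ODE.picard_apply₀], fun t => ?_⟩
  simpa only [hfix] using hasDerivAt_picard hG hy x₀ t

theorem exists_linear_ODE_solution [CompleteSpace E] {A : ℝ → E →L[ℝ] E} {f : ℝ → E}
    (hA : Continuous A) (hf : Continuous f) (x₀ : E) :
    ∃ y : ℝ → E, y 0 = x₀ ∧ ∀ t, HasDerivAt y (A t (y t) + f t) t :=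
  exists_ODE_solution_of_lipschitz (G := fun t x => A t x + f t) hA.norm
    (fun t => norm_nonneg (A t))
    (((hA.comp continuous_fst).clm_apply continuous_snd).add (hf.comp continuous_fst))
    (fun t x y => by
      rw [add_sub_add_right_eq_sub, ← (A t).map_sub]; exact (A t).le_opNorm _) x₀

theorem linear_ODE_solution_unique {A : ℝ → E →L[ℝ] E} {f : ℝ → E} (hA : Continuous A)
    {y w : ℝ → E} (hy : ∀ t, HasDerivAt y (A t (y t) + f t) t)
    (hw : ∀ t, HasDerivAt w (A t (w t) + f t) t) {t₀ : ℝ} (h₀ : y t₀ = w t₀) : y = w := by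
  funext t
  set R := |t| + |t₀| + 1
  have hmem (s : ℝ) (hs : |s| < R) : s ∈ Ioo (-R) R := abs_lt.1 hs
  obtain ⟨K, hK⟩ := isCompact_Icc (a := -R) (b := R) |>.exists_bound_of_continuousOn
    hA.continuousOn
  have hlip : ∀ s ∈ Ioo (-R) R,
      LipschitzOnWith K.toNNReal (fun x => A s x + f s) univ := fun s hs => by
    refine LipschitzOnWith.of_dist_le_mul fun x _ x' _ => ?_
    rw [dist_add_right, dist_eq_norm, dist_eq_norm, ← map_sub]
    exact (A s).le_of_opNorm_le
      ((hK s (Ioo_subset_Icc_self hs)).trans (Real.le_coe_toNNReal K)) _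
  exact ODE_solution_unique_of_mem_Ioo hlip
    (hmem t₀ (by linarith [abs_nonneg t])) (fun s _ => ⟨hy s, mem_univ _⟩)
    (fun s _ => ⟨hw s, mem_univ _⟩) h₀ (hmem t (by linarith [abs_nonneg t₀]))

/-- Pointwise application of a family of operators to a family of vectors over a compact
parameter space. It turns a linear equation with parameters in `X` into a single linear equation
in the Banach space `C(X, E)`. -/
def pointwiseApply (X E : Type*) [TopologicalSpace X] [CompactSpace X] [NormedAddCommGroup E]
    [NormedSpace ℝ E] : C(X, E →L[ℝ] E) →L[ℝ] C(X, E) →L[ℝ] C(X, E) :=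
  LinearMap.mkContinuous₂ (LinearMap.mk₂ ℝ
    (fun (a : C(X, E →L[ℝ] E)) (u : C(X, E)) =>
      (⟨fun x => a x (u x), a.continuous.clm_apply u.continuous⟩ : C(X, E)))
    (fun _ _ _ => by ext; simp) (fun _ _ _ => by ext; simp)
    (fun _ _ _ => by ext; simp) (fun _ _ _ => by ext; simp)) 1 fun a u => by
      rw [one_mul, ContinuousMap.norm_le _ (by positivity)]
      exact fun x => (a x).le_of_opNorm_le_of_le (a.norm_coe_le_norm x) (u.norm_coe_le_norm x)

theorem pointwiseApply_apply {X : Type*} [TopologicalSpace X] [CompactSpace X]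
    (a : C(X, E →L[ℝ] E)) (u : C(X, E)) (x : X) : pointwiseApply X E a u x = a x (u x) := rfl

theorem continuous_linear_ODE_solution [CompleteSpace E] {X : Type*} [TopologicalSpace X]
    [LocallyCompactSpace X] [T2Space X] {A : X → ℝ → E →L[ℝ] E} (hA : Continuous ↿A) (x₀ : E)
    {y : X → ℝ → E} (hy₀ : ∀ p, y p 0 = x₀) (hy : ∀ p t, HasDerivAt (y p) (A p t (y p t)) t) :
    Continuous ↿y := by
  refine continuous_iff_continuousAt.2 fun ⟨p₀, t₀⟩ => ?_
  obtain ⟨K, hK, hKp₀⟩ := exists_compact_mem_nhds p₀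
  have := isCompact_iff_compactSpace.1 hK
  let a : C(ℝ, C(K, E →L[ℝ] E)) := ContinuousMap.curry
    (⟨fun q => A q.2 q.1, hA.comp (by fun_prop : Continuous fun q : ℝ × K => ((q.2 : X), q.1))⟩ :
      C(ℝ × K, E →L[ℝ] E))
  obtain ⟨Y, hY₀, hY⟩ := exists_linear_ODE_solution (A := fun t => pointwiseApply K E (a t))
    (f := fun _ => 0) ((pointwiseApply K E).continuous.comp a.continuous)
    continuous_const (ContinuousMap.const K x₀)
  have hYc : Continuous Y := continuous_iff_continuousAt.2 fun t => (hY t).continuousAt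
  have hYy (p : K) : (fun t => Y t p) = y p := by
    refine linear_ODE_solution_unique (A := A p) (f := fun _ => 0) (t₀ := 0)
      (hA.comp (by fun_prop : Continuous fun t => ((p : X), t))) (fun t => ?_)
      (fun t => by simpa using hy p t) (by simp [hY₀, hy₀])
    refine ((ContinuousMap.evalCLM ℝ p).hasFDerivAt.comp_hasDerivAt t (hY t)).congr_deriv ?_
    simp [pointwiseApply_apply, a]
  have hcont : ContinuousOn ↿y (K ×ˢ univ) := by
    rw [continuousOn_iff_continuous_domRestrict]
    have hev : Continuous fun q : ↥(K ×ˢ (univ : Set ℝ)) => Y q.1.2 ⟨q.1.1, q.2.1⟩ := by fun_prop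
    exact hev.congr fun q => congrFun (hYy ⟨q.1.1, q.2.1⟩) q.1.2
  exact hcont.continuousAt (prod_mem_nhds hKp₀ univ_mem)

end LinearODE

section Hill

open Set Filter Topology Function

/-- Solutions of the inhomogeneous Hill equation `y'' + q y = h`. -/
structure IsHillSolution (q h y : ℝ → ℝ) : Prop where
  differentiable : Differentiable ℝ y
  hasDerivAt_deriv : ∀ x, HasDerivAt (deriv y) (h x - q x * y x) x

/-- The generator `(u, v) ↦ (v, -c u)` of the first-order form of `y'' + c y = 0`. -/
def hillGenerator (c : ℝ) : ℝ × ℝ →L[ℝ] ℝ × ℝ :=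
  .inl ℝ ℝ ℝ ∘L .snd ℝ ℝ ℝ - c • (.inr ℝ ℝ ℝ ∘L .fst ℝ ℝ ℝ)

theorem hillGenerator_apply (c : ℝ) (v : ℝ × ℝ) : hillGenerator c v = (v.2, -(c * v.1)) := by
  simp [hillGenerator]

theorem continuous_hillGenerator : Continuous hillGenerator := by
  unfold hillGenerator
  fun_prop

theorem isHillSolution_of_hasDerivAt {q h y y' : ℝ → ℝ} (hy : ∀ x, HasDerivAt y (y' x) x)
    (hy' : ∀ x, HasDerivAt y' (h x - q x * y x) x) : IsHillSolution q h y where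
  differentiable x := (hy x).differentiableAt
  hasDerivAt_deriv := by rwa [funext fun x => (hy x).deriv]

theorem exists_isHillSolution {q h : ℝ → ℝ} (hq : Continuous q) (hh : Continuous h) (a b : ℝ) :
    ∃ y, IsHillSolution q h y ∧ y 0 = a ∧ deriv y 0 = b := by
  obtain ⟨Y, hY₀, hY⟩ := exists_linear_ODE_solution (f := fun x => ((0 : ℝ), h x))
    (continuous_hillGenerator.comp hq)
    (continuous_const.prodMk hh) (a, b)
  have hfst (x : ℝ) : HasDerivAt (fun x => (Y x).1) (Y x).2 x :=
    ((ContinuousLinearMap.fst ℝ ℝ ℝ).hasFDerivAt.comp_hasDerivAt x (hY x)).congr_deriv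
      (by simp [hillGenerator_apply])
  have hsnd (x : ℝ) : HasDerivAt (fun x => (Y x).2) (h x - q x * (Y x).1) x :=
    ((ContinuousLinearMap.snd ℝ ℝ ℝ).hasFDerivAt.comp_hasDerivAt x (hY x)).congr_deriv
      (by simp [hillGenerator_apply]; ring)
  refine ⟨_, isHillSolution_of_hasDerivAt hfst hsnd, by simp [hY₀], ?_⟩
  rw [(hfst 0).deriv, hY₀]

namespace IsHillSolution

variable {q h k y w : ℝ → ℝ}

theorem hasDerivAt (hy : IsHillSolution q h y) (x : ℝ) : HasDerivAt y (deriv y x) x :=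
  (hy.differentiable x).hasDerivAt

theorem continuous (hy : IsHillSolution q h y) : Continuous y := hy.differentiable.continuous

theorem continuous_deriv (hy : IsHillSolution q h y) : Continuous (deriv y) :=
  continuous_iff_continuousAt.2 fun x => (hy.hasDerivAt_deriv x).continuousAt

theorem add (hy : IsHillSolution q h y) (hw : IsHillSolution q k w) :
    IsHillSolution q (h + k) (y + w) :=
  isHillSolution_of_hasDerivAt (fun x => (hy.hasDerivAt x).add (hw.hasDerivAt x)) fun x =>
    ((hy.hasDerivAt_deriv x).add (hw.hasDerivAt_deriv x)).congr_deriv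
      (by simp only [Pi.add_apply]; ring)

theorem const_smul (hy : IsHillSolution q h y) (c : ℝ) : IsHillSolution q (c • h) (c • y) :=
  isHillSolution_of_hasDerivAt (fun x => (hy.hasDerivAt x).const_smul c) fun x =>
    ((hy.hasDerivAt_deriv x).const_smul c).congr_deriv
      (by simp only [Pi.smul_apply, smul_eq_mul]; ring)

theorem deriv_add (hy : IsHillSolution q h y) (hw : IsHillSolution q k w) (x : ℝ) :
    deriv (y + w) x = deriv y x + deriv w x :=
  ((hy.hasDerivAt x).add (hw.hasDerivAt x)).deriv

theorem deriv_const_smul (hy : IsHillSolution q h y) (c x : ℝ) :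
    deriv (c • y) x = c * deriv y x :=
  ((hy.hasDerivAt x).const_smul c).deriv

theorem hasDerivAt_wronskian (hy : IsHillSolution q h y) (hw : IsHillSolution q k w) (x : ℝ) :
    HasDerivAt (fun x => y x * deriv w x - deriv y x * w x) (y x * k x - h x * w x) x :=
  (((hy.hasDerivAt x).mul (hw.hasDerivAt_deriv x)).sub
    ((hy.hasDerivAt_deriv x).mul (hw.hasDerivAt x))).congr_deriv (by ring)

theorem hasDerivAt_phase (hy : IsHillSolution q h y) (x : ℝ) :
    HasDerivAt (fun x => (y x, deriv y x)) (hillGenerator (q x) (y x, deriv y x) + (0, h x)) x :=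
  ((hy.hasDerivAt x).prodMk (hy.hasDerivAt_deriv x)).congr_deriv
    (by simp [hillGenerator_apply]; ring)

theorem eq_of_phase_eq (hq : Continuous q) (hy : IsHillSolution q h y)
    (hw : IsHillSolution q h w) {x₀ : ℝ} (h₀ : y x₀ = w x₀) (h₁ : deriv y x₀ = deriv w x₀) :
    y = w := by
  have h := linear_ODE_solution_unique (continuous_hillGenerator.comp hq) hy.hasDerivAt_phase
    hw.hasDerivAt_phase (t₀ := x₀) (by simp [h₀, h₁])
  exact funext fun x => congrArg Prod.fst (congrFun h x)

theorem comp_add_const (hy : IsHillSolution q h y) {L : ℝ} (hq : Periodic q L)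
    (hh : Periodic h L) : IsHillSolution q h (fun x => y (x + L)) :=
  isHillSolution_of_hasDerivAt (fun x => (hy.hasDerivAt (x + L)).comp_add_const x L) fun x =>
    ((hy.hasDerivAt_deriv (x + L)).comp_add_const x L).congr_deriv (by rw [hq, hh])

theorem periodic (hq : Continuous q) (hy : IsHillSolution q h y) {L : ℝ}
    (hqL : Periodic q L) (hhL : Periodic h L) (h₀ : y L = y 0) (h₁ : deriv y L = deriv y 0) :
    Periodic y L :=
  congrFun (eq_of_phase_eq hq (hy.comp_add_const hqL hhL) hy (x₀ := 0) (by simpa using h₀)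
    (by rw [deriv_comp_add_const, zero_add, h₁]))

theorem contDiff (hy : IsHillSolution q h y) (hq : ContDiff ℝ (⊤ : ℕ∞) q)
    (hh : ContDiff ℝ (⊤ : ℕ∞) h) : ContDiff ℝ (⊤ : ℕ∞) y := by
  suffices H : ∀ n : ℕ, ContDiff ℝ n y ∧ ContDiff ℝ n (deriv y) from
    contDiff_infty.2 fun n => (H n).1
  intro n
  induction n with
  | zero => exact ⟨contDiff_zero.2 hy.continuous, contDiff_zero.2 hy.continuous_deriv⟩
  | succ n ih =>
    have hn : ((n : ℕ∞) : WithTop ℕ∞) ≤ ((⊤ : ℕ∞) : WithTop ℕ∞) := mod_cast le_top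
    push_cast
    rw [contDiff_succ_iff_deriv, contDiff_succ_iff_deriv,
      show deriv (deriv y) = fun x => h x - q x * y x from
        funext fun x => (hy.hasDerivAt_deriv x).deriv]
    exact ⟨⟨hy.differentiable, by simp, ih.2⟩,
      fun x => (hy.hasDerivAt_deriv x).differentiableAt, by simp,
      (hh.of_le hn).sub ((hq.of_le hn).mul ih.1)⟩

theorem continuous_uncurry {X : Type*} [TopologicalSpace X] [LocallyCompactSpace X] [T2Space X]
    {q y : X → ℝ → ℝ} (hq : Continuous ↿q) (hy : ∀ p, IsHillSolution (q p) 0 (y p)) {a b : ℝ}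
    (ha : ∀ p, y p 0 = a) (hb : ∀ p, deriv (y p) 0 = b) :
    Continuous ↿y ∧ Continuous ↿fun p => deriv (y p) := by
  have h := continuous_linear_ODE_solution (A := fun p x => hillGenerator (q p x))
    (continuous_hillGenerator.comp hq) (a, b)
    (y := fun p x => (y p x, deriv (y p) x)) (fun p => by simp [ha, hb])
    (fun p x => ((hy p).hasDerivAt_phase x).congr_deriv (by simp))
  exact ⟨h.fst, h.snd⟩

end IsHillSolution

theorem isHillSolution_zero (q : ℝ → ℝ) : IsHillSolution q 0 0 :=
  isHillSolution_of_hasDerivAt (y' := 0) (fun x => hasDerivAt_const x 0)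
    fun x => by simp

namespace IsHillSolution

variable {q y : ℝ → ℝ}

theorem sq_add_deriv_sq_pos (hq : Continuous q) (hy : IsHillSolution q 0 y) (hy₀ : y ≠ 0) (x : ℝ) :
    0 < y x ^ 2 + deriv y x ^ 2 := by
  by_contra! h
  have h₀ : y x = 0 := by nlinarith [sq_nonneg (y x), sq_nonneg (deriv y x)]
  have h₁ : deriv y x = 0 := by nlinarith [sq_nonneg (y x), sq_nonneg (deriv y x)]
  exact hy₀ (hy.eq_of_phase_eq hq (isHillSolution_zero q) (by simpa using h₀) (by simpa using h₁))

end IsHillSolution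

/-- The Prüfer angle of a solution `y` of `y'' + q y = 0` with `y 0 = 0`: the angle from the
`y'`-axis to the phase vector `(y', y)`, defined by integrating its angular velocity. -/
def pruferAngle (q y : ℝ → ℝ) (x : ℝ) : ℝ :=
  ∫ t in (0 : ℝ)..x, (deriv y t ^ 2 + q t * y t ^ 2) / (y t ^ 2 + deriv y t ^ 2)

/-- The Prüfer radius of a solution `y` of `y'' + q y = 0`, written so as to be smooth and
signed. -/
def pruferRadius (q y : ℝ → ℝ) (x : ℝ) : ℝ :=
  y x * Real.sin (pruferAngle q y x) + deriv y x * Real.cos (pruferAngle q y x)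

theorem pruferAngle_zero (q y : ℝ → ℝ) : pruferAngle q y 0 = 0 :=
  intervalIntegral.integral_same

namespace IsHillSolution

variable {q y : ℝ → ℝ}

theorem hasDerivAt_pruferAngle_density (hq : Continuous q) (hy : IsHillSolution q 0 y) (hy₀ : y ≠ 0)
    (x : ℝ) : HasDerivAt (pruferAngle q y)
      ((deriv y x ^ 2 + q x * y x ^ 2) / (y x ^ 2 + deriv y x ^ 2)) x :=
  have hyc := hy.continuous
  have hyc' := hy.continuous_deriv
  (Continuous.integral_hasStrictDerivAt (.div (by fun_prop) (by fun_prop)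
    fun t => (hy.sq_add_deriv_sq_pos hq hy₀ t).ne') 0 x).hasDerivAt

theorem mul_cos_pruferAngle (hq : Continuous q) (hy : IsHillSolution q 0 y) (h₀ : y 0 = 0)
    (hy₀ : y ≠ 0) (x : ℝ) :
    y x * Real.cos (pruferAngle q y x) = deriv y x * Real.sin (pruferAngle q y x) := by
  have hyc := hy.continuous
  have hyc' := hy.continuous_deriv
  have hpos := hy.sq_add_deriv_sq_pos hq hy₀
  have hΦ := hy.hasDerivAt_pruferAngle_density hq hy₀
  set Φ := pruferAngle q y
  let c (x : ℝ) : ℝ := (1 - q x) * y x * deriv y x / (y x ^ 2 + deriv y x ^ 2)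
  have hc : Continuous c := .div (by fun_prop) (by fun_prop) fun t => (hpos t).ne'
  let u (x : ℝ) : ℝ := y x * Real.cos (Φ x) - deriv y x * Real.sin (Φ x)
  have hu (x : ℝ) : HasDerivAt u (c x * u x) x := by
    refine (((hy.hasDerivAt x).mul (hΦ x).cos).sub
      ((hy.hasDerivAt_deriv x).mul (hΦ x).sin)).congr_deriv ?_
    have := (hpos x).ne'
    simp only [u, c, Pi.zero_apply]
    field_simp
    ring
  have hu₀ : u = 0 :=
    linear_ODE_solution_unique (f := 0) (t₀ := 0) (A := fun x => c x • ContinuousLinearMap.id ℝ ℝ)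
      (hc.smul continuous_const) (fun x => by simpa using hu x)
      (fun x => by simp) (by simp [u, h₀, Φ, pruferAngle_zero])
  exact sub_eq_zero.1 (congrFun hu₀ x)

theorem pruferRadius_mul_sin (hq : Continuous q) (hy : IsHillSolution q 0 y) (h₀ : y 0 = 0)
    (hy₀ : y ≠ 0) (x : ℝ) : pruferRadius q y x * Real.sin (pruferAngle q y x) = y x := by
  unfold pruferRadius
  linear_combination y x * Real.sin_sq_add_cos_sq (pruferAngle q y x)
    - Real.cos (pruferAngle q y x) * hy.mul_cos_pruferAngle hq h₀ hy₀ x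

theorem pruferRadius_mul_cos (hq : Continuous q) (hy : IsHillSolution q 0 y) (h₀ : y 0 = 0)
    (hy₀ : y ≠ 0) (x : ℝ) : pruferRadius q y x * Real.cos (pruferAngle q y x) = deriv y x := by
  unfold pruferRadius
  linear_combination deriv y x * Real.sin_sq_add_cos_sq (pruferAngle q y x)
    + Real.sin (pruferAngle q y x) * hy.mul_cos_pruferAngle hq h₀ hy₀ x

theorem pruferRadius_ne_zero (hq : Continuous q) (hy : IsHillSolution q 0 y) (h₀ : y 0 = 0)
    (hy₀ : y ≠ 0) (x : ℝ) : pruferRadius q y x ≠ 0 := fun hρ => by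
  have h := hy.sq_add_deriv_sq_pos hq hy₀ x
  rw [← hy.pruferRadius_mul_sin hq h₀ hy₀, ← hy.pruferRadius_mul_cos hq h₀ hy₀, hρ] at h
  simp at h

theorem pruferRadius_pos (hq : Continuous q) (hy : IsHillSolution q 0 y) (h₀ : y 0 = 0)
    (h₁ : 0 < deriv y 0) (x : ℝ) : 0 < pruferRadius q y x := by
  have hy₀ : y ≠ 0 := by rintro rfl; simp at h₁
  have hyc := hy.continuous
  have hyc' := hy.continuous_deriv
  have hΦ : Continuous (pruferAngle q y) := continuous_iff_continuousAt.2 fun x =>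
    (hy.hasDerivAt_pruferAngle_density hq hy₀ x).continuousAt
  have hρ : Continuous (pruferRadius q y) := by unfold pruferRadius; fun_prop
  by_contra! hx
  obtain ⟨c, hc⟩ := mem_range_of_exists_le_of_exists_ge hρ ⟨x, hx⟩
    ⟨0, by simpa [pruferRadius, pruferAngle_zero] using h₁.le⟩
  exact hy.pruferRadius_ne_zero hq h₀ hy₀ c hc

theorem hasDerivAt_pruferAngle (hq : Continuous q) (hy : IsHillSolution q 0 y) (h₀ : y 0 = 0)
    (hy₀ : y ≠ 0) (x : ℝ) : HasDerivAt (pruferAngle q y)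
      (Real.cos (pruferAngle q y x) ^ 2 + q x * Real.sin (pruferAngle q y x) ^ 2) x := by
  have hcs := Real.sin_sq_add_cos_sq (pruferAngle q y x)
  refine (hy.hasDerivAt_pruferAngle_density hq hy₀ x).congr_deriv ?_
  rw [div_eq_iff (hy.sq_add_deriv_sq_pos hq hy₀ x).ne', ← hy.pruferRadius_mul_sin hq h₀ hy₀,
    ← hy.pruferRadius_mul_cos hq h₀ hy₀]
  linear_combination -pruferRadius q y x ^ 2 * (Real.cos (pruferAngle q y x) ^ 2
    + q x * Real.sin (pruferAngle q y x) ^ 2) * hcs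

end IsHillSolution

theorem tendsto_integral_inv_one_add_mul_sin_sq (M : ℝ) :
    Tendsto (fun ν : ℝ => ∫ α in (0 : ℝ)..M, (1 + ν * Real.sin α ^ 2)⁻¹) atTop (𝓝 0) := by
  have hK {ν : ℝ} (hν : 0 ≤ ν) (α : ℝ) : 1 ≤ 1 + ν * Real.sin α ^ 2 :=
    le_add_of_nonneg_right (by positivity)
  have hsin : ∀ᵐ α ∂MeasureTheory.volume, Real.sin α ≠ 0 := by
    refine ((countable_range fun n : ℤ => (n : ℝ) * Real.pi).ae_notMem _).mono fun α hα h => ?_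
    obtain ⟨n, hn⟩ := Real.sin_eq_zero_iff.1 h
    exact hα ⟨n, hn⟩
  suffices Tendsto (fun ν : ℝ => ∫ α in (0 : ℝ)..M, (1 + ν * Real.sin α ^ 2)⁻¹) atTop
      (𝓝 (∫ _ in (0 : ℝ)..M, (0 : ℝ))) by simpa only [intervalIntegral.integral_zero] using this
  refine intervalIntegral.tendsto_integral_filter_of_dominated_convergence (fun _ => 1)
    (.of_forall fun ν => Measurable.aestronglyMeasurable (by fun_prop)) ?_
    intervalIntegrable_const ?_
  · filter_upwards [eventually_ge_atTop 0] with ν hν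
    refine .of_forall fun α _ => ?_
    rw [norm_inv, Real.norm_of_nonneg (zero_le_one.trans (hK hν α))]
    exact inv_le_one_of_one_le₀ (hK hν α)
  · filter_upwards [hsin] with α hα _
    have hα₂ : 0 < Real.sin α ^ 2 := by positivity
    exact (tendsto_atTop_add_const_left _ 1
      (tendsto_id.atTop_mul_const hα₂)).inv_tendsto_atTop

theorem sub_le_integral_inv_one_add_mul_sin_sq {Φ q : ℝ → ℝ} {ν a c : ℝ} (hν : 0 ≤ ν)
    (hac : a ≤ c)
    (hΦ : ∀ x, HasDerivAt Φ (Real.cos (Φ x) ^ 2 + q x * Real.sin (Φ x) ^ 2) x)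
    (hq : ∀ x ∈ Icc a c, 1 + ν ≤ q x) :
    c - a ≤ ∫ α in Φ a..Φ c, (1 + ν * Real.sin α ^ 2)⁻¹ := by
  have hK₀ (α : ℝ) : 0 < 1 + ν * Real.sin α ^ 2 := by positivity
  have hK : Continuous fun α : ℝ => (1 + ν * Real.sin α ^ 2)⁻¹ :=
    .inv₀ (by fun_prop) fun α => (hK₀ α).ne'
  have hF (x : ℝ) := (hK.integral_hasStrictDerivAt 0 (Φ x)).hasDerivAt.comp x (hΦ x)
  have h := (convex_Icc a c).mul_sub_le_image_sub_of_le_deriv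
    (fun x _ => (hF x).continuousAt.continuousWithinAt)
    (fun x _ => (hF x).differentiableAt.differentiableWithinAt) (C := 1) (fun x hx => by
      rw [(hF x).deriv, ← div_eq_inv_mul, one_le_div (hK₀ _)]
      nlinarith [Real.sin_sq_add_cos_sq (Φ x), sq_nonneg (Real.sin (Φ x)),
        hq x (interior_subset hx)]) a (left_mem_Icc.2 hac) c (right_mem_Icc.2 hac) hac
  rwa [one_mul, Function.comp_apply, Function.comp_apply,
    intervalIntegral.integral_interval_sub_left (hK.intervalIntegrable _ _)
      (hK.intervalIntegrable _ _)] at h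

theorem exists_Icc_le_of_periodic {B : ℝ → ℝ} (hB : Continuous B) {L : ℝ} (hL : 0 < L)
    (hBL : Periodic B L) (hpos : ∃ x, 0 < B x) :
    ∃ δ > 0, ∃ a c, 0 ≤ a ∧ a < c ∧ c ≤ L ∧ ∀ x ∈ Icc a c, δ ≤ B x := by
  obtain ⟨x, hx⟩ := hpos
  obtain ⟨a, ⟨ha₀, haL⟩, hxa⟩ := hBL.exists_mem_Ico₀ hL x
  have hnhds : {y | B a / 2 ≤ B y} ∩ Iic L ∈ 𝓝[≥] a := mem_nhdsWithin_of_mem_nhds <|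
    inter_mem (hB.continuousAt.eventually (Ici_mem_nhds (half_lt_self (hxa ▸ hx))))
      (Iic_mem_nhds haL)
  obtain ⟨c, hac, hc⟩ := mem_nhdsGE_iff_exists_Icc_subset.1 hnhds
  exact ⟨B a / 2, half_pos (hxa ▸ hx), a, c, ha₀, hac, (hc (right_mem_Icc.2 hac.le)).2,
    fun y hy => (hc hy).1⟩

theorem IsHillSolution.tendsto_pruferAngle_atTop {B : ℝ → ℝ} (hB : Continuous B)
    (hB₀ : ∀ x, 0 ≤ B x) {L δ a c : ℝ} (hδ : 0 < δ) (ha : 0 ≤ a) (hac : a < c) (hcL : c ≤ L)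
    (hδB : ∀ x ∈ Icc a c, δ ≤ B x) {y : ℝ → ℝ → ℝ}
    (hy : ∀ ν, IsHillSolution (fun x => 1 + ν * B x) 0 (y ν)) (h₀ : ∀ ν, y ν 0 = 0)
    (hy₀ : ∀ ν, y ν ≠ 0) :
    Tendsto (fun ν => pruferAngle (fun x => 1 + ν * B x) (y ν) L) atTop atTop := by
  rw [tendsto_atTop]
  intro M
  filter_upwards [eventually_ge_atTop 0, ((tendsto_integral_inv_one_add_mul_sin_sq M).comp
    (tendsto_id.const_mul_atTop hδ)).eventually_lt_const (sub_pos.2 hac)] with ν hν hlt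
  set q : ℝ → ℝ := fun x => 1 + ν * B x
  set Φ := pruferAngle q (y ν)
  have hΦ (x : ℝ) : HasDerivAt Φ (Real.cos (Φ x) ^ 2 + q x * Real.sin (Φ x) ^ 2) x :=
    (hy ν).hasDerivAt_pruferAngle (by fun_prop) (h₀ ν) (hy₀ ν) x
  have hmono : Monotone Φ := monotone_of_deriv_nonneg (fun x => (hΦ x).differentiableAt)
    fun x => by
      have := mul_nonneg hν (hB₀ x)
      rw [(hΦ x).deriv]
      positivity
  have hK {α : ℝ} : 0 ≤ (1 + δ * ν * Real.sin α ^ 2)⁻¹ := by positivity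
  have hKc : Continuous fun α : ℝ => (1 + δ * ν * Real.sin α ^ 2)⁻¹ :=
    .inv₀ (by fun_prop) fun α => by positivity
  by_contra! hM
  refine hlt.not_ge ?_
  calc c - a ≤ ∫ α in Φ a..Φ c, (1 + δ * ν * Real.sin α ^ 2)⁻¹ :=
        sub_le_integral_inv_one_add_mul_sin_sq (by positivity) hac.le hΦ fun x hx => by
          simp only [q]
          nlinarith [hδB x hx]
    _ ≤ ∫ α in (0 : ℝ)..M, (1 + δ * ν * Real.sin α ^ 2)⁻¹ :=
        intervalIntegral.integral_mono_interval
          ((pruferAngle_zero q (y ν)).symm.trans_le (hmono ha)) (hmono hac.le)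
          ((hmono hcL).trans hM.le) (.of_forall fun α => hK) (hKc.intervalIntegrable _ _)

/-- The jump of the phase vector of `y` over the interval `[0, L]`; for solutions of a Hill equation
with `L`-periodic data, its vanishing characterizes the `L`-periodic ones. -/
def periodDefect (L : ℝ) (y : ℝ → ℝ) : ℝ × ℝ := (y L - y 0, deriv y L - deriv y 0)

/-- The linear map sending coefficients `(a, b)` to the period defect of `a • y + b • w`. -/
def periodDefectMap (L : ℝ) (y w : ℝ → ℝ) : ℝ × ℝ →ₗ[ℝ] ℝ × ℝ :=
  (LinearMap.fst ℝ ℝ ℝ).smulRight (periodDefect L y) +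
    (LinearMap.snd ℝ ℝ ℝ).smulRight (periodDefect L w)

namespace IsHillSolution

variable {q h k y w : ℝ → ℝ} {L : ℝ}

theorem lincomb (hy : IsHillSolution q h y) (hw : IsHillSolution q k w) (v : ℝ × ℝ) :
    IsHillSolution q (v.1 • h + v.2 • k) (v.1 • y + v.2 • w) :=
  (hy.const_smul v.1).add (hw.const_smul v.2)

theorem periodDefect_add (hy : IsHillSolution q h y) (hw : IsHillSolution q k w) :
    periodDefect L (y + w) = periodDefect L y + periodDefect L w := by
  simp only [periodDefect, hy.deriv_add hw, Pi.add_apply, Prod.mk_add_mk]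
  congr 1 <;> ring

theorem periodDefect_const_smul (hy : IsHillSolution q h y) (c : ℝ) :
    periodDefect L (c • y) = c • periodDefect L y := by
  simp only [periodDefect, hy.deriv_const_smul, Pi.smul_apply, smul_eq_mul, Prod.smul_mk, mul_sub]

theorem periodDefect_lincomb (hy : IsHillSolution q h y) (hw : IsHillSolution q k w)
    (v : ℝ × ℝ) : periodDefect L (v.1 • y + v.2 • w) = periodDefectMap L y w v := by
  rw [(hy.const_smul v.1).periodDefect_add (hw.const_smul v.2), hy.periodDefect_const_smul,
    hw.periodDefect_const_smul]
  rfl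

theorem periodic_of_periodDefect_eq_zero (hq : Continuous q) (hy : IsHillSolution q h y)
    (hqL : Periodic q L) (hhL : Periodic h L) (hd : periodDefect L y = 0) : Periodic y L :=
  hy.periodic hq hqL hhL (sub_eq_zero.1 (congrArg Prod.fst hd))
    (sub_eq_zero.1 (congrArg Prod.snd hd))

end IsHillSolution

/-- The solutions `C`, `S` of `y'' + q y = 0` whose phase vectors at `0` are the standard basis. -/
structure IsHillBasis (q C S : ℝ → ℝ) : Prop where
  cos : IsHillSolution q 0 C
  sin : IsHillSolution q 0 S
  cos_zero : C 0 = 1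
  deriv_cos_zero : deriv C 0 = 0
  sin_zero : S 0 = 0
  deriv_sin_zero : deriv S 0 = 1

theorem exists_isHillBasis {q : ℝ → ℝ} (hq : Continuous q) : ∃ C S, IsHillBasis q C S := by
  obtain ⟨C, hC, hC₀, hC₁⟩ := exists_isHillSolution hq (continuous_const (y := (0 : ℝ))) 1 0
  obtain ⟨S, hS, hS₀, hS₁⟩ := exists_isHillSolution hq (continuous_const (y := (0 : ℝ))) 0 1
  exact ⟨C, S, hC, hS, hC₀, hC₁, hS₀, hS₁⟩

namespace IsHillBasis

variable {q C S : ℝ → ℝ}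

theorem sin_ne_zero (h : IsHillBasis q C S) : S ≠ 0 := by
  rintro rfl
  simpa using h.deriv_sin_zero

theorem wronskian_eq_one (h : IsHillBasis q C S) (x : ℝ) :
    C x * deriv S x - deriv C x * S x = 1 := by
  have hW := is_const_of_deriv_eq_zero
    (fun x => (h.cos.hasDerivAt_wronskian h.sin x).differentiableAt)
    (fun x => by simpa using (h.cos.hasDerivAt_wronskian h.sin x).deriv) x 0
  simpa [h.cos_zero, h.deriv_cos_zero, h.sin_zero, h.deriv_sin_zero] using hW

theorem eq_zero_of_lincomb_eq_zero (h : IsHillBasis q C S) {v : ℝ × ℝ}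
    (hv : v.1 • C + v.2 • S = 0) : v = 0 := by
  have hderiv := (h.cos.const_smul v.1).deriv_add (h.sin.const_smul v.2) 0
  rw [h.cos.deriv_const_smul, h.sin.deriv_const_smul, h.deriv_cos_zero, h.deriv_sin_zero, hv]
    at hderiv
  exact Prod.ext (by simpa [h.cos_zero, h.sin_zero] using congrFun hv 0)
    (by simpa using hderiv.symm)

theorem exists_periodic (h : IsHillBasis q C S) (hq : Continuous q) {L : ℝ} (hqL : Periodic q L)
    (htrace : C L + deriv S L = 2) : ∃ y ≠ 0, IsHillSolution q 0 y ∧ Periodic y L := by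
  have hdet : !![C L - 1, S L; deriv C L, deriv S L - 1].det = 0 := by
    rw [Matrix.det_fin_two_of]
    linear_combination h.wronskian_eq_one L - htrace
  obtain ⟨v, hv, hMv⟩ := Matrix.exists_mulVec_eq_zero_iff.2 hdet
  have hv₀ := congrFun hMv 0
  have hv₁ := congrFun hMv 1
  simp only [Matrix.mulVec, dotProduct, Fin.sum_univ_two, Matrix.of_apply, Matrix.cons_val_zero,
    Matrix.cons_val_one, Pi.zero_apply, Matrix.cons_val_fin_one, Matrix.cons_val'] at hv₀ hv₁
  have hy : IsHillSolution q 0 (v 0 • C + v 1 • S) := by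
    simpa using h.cos.lincomb h.sin (v 0, v 1)
  refine ⟨_, fun hy₀ => hv ?_, hy, hy.periodic_of_periodDefect_eq_zero hq hqL (fun _ => rfl) ?_⟩
  · have hv₀₁ := h.eq_zero_of_lincomb_eq_zero (v := (v 0, v 1)) hy₀
    ext i
    fin_cases i
    exacts [congrArg Prod.fst hv₀₁, congrArg Prod.snd hv₀₁]
  · rw [h.cos.periodDefect_lincomb h.sin (v 0, v 1)]
    refine Prod.ext ?_ ?_ <;> simp only [periodDefectMap, periodDefect, h.cos_zero, h.sin_zero,
      h.deriv_cos_zero, h.deriv_sin_zero, LinearMap.add_apply, LinearMap.smulRight_apply,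
      LinearMap.fst_apply, LinearMap.snd_apply, Prod.fst_add, Prod.snd_add, Prod.smul_mk,
      smul_eq_mul, Prod.fst_zero, Prod.snd_zero]
    exacts [by linear_combination hv₀, by linear_combination hv₁]

theorem two_le_trace (h : IsHillBasis q C S) (hq : Continuous q) {L : ℝ} {n : ℕ}
    (hn : pruferAngle q S L = n * (2 * Real.pi)) : 2 ≤ C L + deriv S L := by
  have hS := h.sin.pruferRadius_mul_sin hq h.sin_zero h.sin_ne_zero L
  have hS' := h.sin.pruferRadius_mul_cos hq h.sin_zero h.sin_ne_zero L
  have hρ := h.sin.pruferRadius_pos hq h.sin_zero (by simp [h.deriv_sin_zero]) L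
  rw [hn, Real.cos_nat_mul_two_pi, mul_one] at hS'
  have hsin : Real.sin (n * (2 * Real.pi)) = 0 := by
    simpa using Real.sin_add_nat_mul_two_pi 0 n
  rw [hn, hsin, mul_zero] at hS
  have hW := h.wronskian_eq_one L
  rw [← hS, ← hS'] at hW
  rw [← hS']
  nlinarith [sq_nonneg (pruferRadius q S L - 1), sq_nonneg (C L - 1)]

theorem trace_le_neg_two (h : IsHillBasis q C S) (hq : Continuous q) {L : ℝ} {n : ℕ}
    (hn : pruferAngle q S L = n * (2 * Real.pi) + Real.pi) : C L + deriv S L ≤ -2 := by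
  have hS := h.sin.pruferRadius_mul_sin hq h.sin_zero h.sin_ne_zero L
  have hS' := h.sin.pruferRadius_mul_cos hq h.sin_zero h.sin_ne_zero L
  have hρ := h.sin.pruferRadius_pos hq h.sin_zero (by simp [h.deriv_sin_zero]) L
  rw [hn, Real.cos_nat_mul_two_pi_add_pi] at hS'
  have hsin : Real.sin (n * (2 * Real.pi) + Real.pi) = 0 := by
    rw [add_comm, Real.sin_add_nat_mul_two_pi, Real.sin_pi]
  rw [hn, hsin, mul_zero] at hS
  have hW := h.wronskian_eq_one L
  rw [← hS, ← hS'] at hW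
  rw [← hS']
  nlinarith [sq_nonneg (pruferRadius q S L - 1), sq_nonneg (C L + 1)]

end IsHillBasis

theorem exists_ge_eq_of_tendsto_atTop {φ : ℝ → ℝ} (hφ : Continuous φ)
    (hφt : Tendsto φ atTop atTop) {N v : ℝ} (hv : φ N ≤ v) : ∃ ν ≥ N, φ ν = v := by
  obtain ⟨ν, hνv, hν⟩ := ((hφt.eventually_ge_atTop v).and (eventually_ge_atTop N)).exists
  obtain ⟨μ, hμ, rfl⟩ := isPreconnected_Ici.intermediate_value (mem_Ici.2 le_rfl) hν hφ.continuousOn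
    ⟨hv, hνv⟩
  exact ⟨μ, hμ, rfl⟩

theorem continuous_pruferAngle {X : Type*} [TopologicalSpace X] [LocallyCompactSpace X] [T2Space X]
    [FirstCountableTopology X] {q S : X → ℝ → ℝ} (hq : Continuous ↿q)
    (hS : ∀ p, IsHillSolution (q p) 0 (S p)) {b : ℝ} (hb : b ≠ 0) (h₀ : ∀ p, S p 0 = 0)
    (h₁ : ∀ p, deriv (S p) 0 = b) (L : ℝ) : Continuous fun p => pruferAngle (q p) (S p) L := by
  obtain ⟨hSc, hSc'⟩ := IsHillSolution.continuous_uncurry hq hS h₀ h₁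
  refine intervalIntegral.continuous_parametric_intervalIntegral_of_continuous' ?_ 0 L
  refine Continuous.div ((hSc'.pow 2).add (hq.mul (hSc.pow 2))) ((hSc.pow 2).add (hSc'.pow 2)) ?_
  rintro ⟨p, x⟩
  refine ((hS p).sq_add_deriv_sq_pos (by fun_prop) (fun h => hb ?_) x).ne'
  simp [← h₁ p, h]

/-- As `ν → ∞` the Prüfer angle at `L` sweeps through all multiples of `π`, where the trace of the
monodromy is alternately at least `2` and at most `-2`; periodic solutions occur where it is `2`. -/
theorem exists_periodic_isHillSolution_large {B : ℝ → ℝ} (hB : Continuous B) {L : ℝ} (hL : 0 < L)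
    (hBL : Periodic B L) (hB₀ : ∀ x, 0 ≤ B x) (hpos : ∃ x, 0 < B x) (N : ℝ) :
    ∃ ν ≥ N, ∃ y ≠ 0, IsHillSolution (fun x => 1 + ν * B x) 0 y ∧ Periodic y L := by
  let q (ν x : ℝ) : ℝ := 1 + ν * B x
  have hq : Continuous ↿q := by fun_prop
  have hqν (ν : ℝ) : Continuous (q ν) := by fun_prop
  choose C S hCS using fun ν => exists_isHillBasis (hqν ν)
  have hφc := continuous_pruferAngle hq (fun ν => (hCS ν).sin) one_ne_zero
    (fun ν => (hCS ν).sin_zero) (fun ν => (hCS ν).deriv_sin_zero) L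
  obtain ⟨δ, hδ, a, c, ha, hac, hcL, hδB⟩ := exists_Icc_le_of_periodic hB hL hBL hpos
  have hφt := IsHillSolution.tendsto_pruferAngle_atTop hB hB₀ hδ ha hac hcL hδB
    (fun ν => (hCS ν).sin) (fun ν => (hCS ν).sin_zero) (fun ν => (hCS ν).sin_ne_zero)
  have htrace : Continuous fun ν => C ν L + deriv (S ν) L :=
    ((IsHillSolution.continuous_uncurry hq (fun ν => (hCS ν).cos) (fun ν => (hCS ν).cos_zero)
      (fun ν => (hCS ν).deriv_cos_zero)).1.comp (by fun_prop : Continuous fun ν : ℝ => (ν, L))).add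
    ((IsHillSolution.continuous_uncurry hq (fun ν => (hCS ν).sin) (fun ν => (hCS ν).sin_zero)
      (fun ν => (hCS ν).deriv_sin_zero)).2.comp (by fun_prop : Continuous fun ν : ℝ => (ν, L)))
  obtain ⟨n, hn⟩ := exists_nat_ge (pruferAngle (q N) (S N) L / (2 * Real.pi))
  rw [div_le_iff₀ Real.two_pi_pos] at hn
  obtain ⟨ν₁, hν₁, hφ₁⟩ := exists_ge_eq_of_tendsto_atTop hφc hφt hn
  obtain ⟨ν₂, hν₂, hφ₂⟩ := exists_ge_eq_of_tendsto_atTop hφc hφt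
    (hn.trans (le_add_of_nonneg_right Real.pi_pos.le))
  obtain ⟨ν, hν, hνtrace⟩ := isPreconnected_Ici.intermediate_value hν₂ hν₁ htrace.continuousOn
    ⟨((hCS ν₂).trace_le_neg_two (hqν ν₂) hφ₂).trans (by norm_num),
      (hCS ν₁).two_le_trace (hqν ν₁) hφ₁⟩
  exact ⟨ν, hν, (hCS ν).exists_periodic (hqν ν) (fun x => by simp only [q, hBL x]) hνtrace⟩

theorem exists_ker_generalized_preimage {K V : Type*} [DivisionRing K] [AddCommGroup V]
    [Module K V] [FiniteDimensional K V] (A T : V →ₗ[K] V)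
    (hAT : ∀ v k, A k = 0 → A v + T k = 0 → k = 0) (w : V) :
    ∃ v k, A k = 0 ∧ A v + T k = w := by
  let φ : A.ker →ₗ[K] V ⧸ A.range := A.range.mkQ ∘ₗ T ∘ₗ A.ker.subtype
  have hdim : Module.finrank K A.ker = Module.finrank K (V ⧸ A.range) := by
    have h₁ := A.finrank_range_add_finrank_ker
    have h₂ := A.range.finrank_quotient_add_finrank
    omega
  have hφ : Function.Injective φ := by
    refine (injective_iff_map_eq_zero φ).2 fun k hk => ?_
    obtain ⟨v, hv⟩ := (Submodule.Quotient.mk_eq_zero _).1 hk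
    exact Subtype.ext (hAT (-v) k k.2 (by simp [hv]))
  obtain ⟨k, hk⟩ := (LinearMap.injective_iff_surjective_of_finrank_eq_finrank hdim).1 hφ
    (A.range.mkQ w)
  obtain ⟨v, hv⟩ := (Submodule.Quotient.eq _).1 hk
  exact ⟨-v, k, k.2, by simp [hv]⟩

theorem IsHillSolution.integral_mul_sq_eq_zero {q B g₀ g₁ : ℝ → ℝ} (hB : Continuous B) {L κ : ℝ}
    (hκ : κ ≠ 0) (hg₀ : IsHillSolution q 0 g₀) (hg₀L : Periodic g₀ L)
    (hg₁ : IsHillSolution q (fun x => κ * (B x * g₀ x)) g₁) (hg₁L : Periodic g₁ L) :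
    ∫ x in (0 : ℝ)..L, B x * g₀ x ^ 2 = 0 := by
  have hderiv {g : ℝ → ℝ} (hg : Periodic g L) : deriv g L = deriv g 0 := by
    rw [← zero_add L, ← deriv_comp_add_const, funext hg]
  have hc := hg₀.continuous
  have hW (x : ℝ) : HasDerivAt (fun x => g₀ x * deriv g₁ x - deriv g₀ x * g₁ x)
      (κ * (B x * g₀ x ^ 2)) x :=
    (hg₀.hasDerivAt_wronskian hg₁ x).congr_deriv (by simp only [Pi.zero_apply]; ring)
  have h := intervalIntegral.integral_eq_sub_of_hasDerivAt (fun x _ => hW x)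
    (Continuous.intervalIntegrable (by fun_prop) 0 L)
  rw [hderiv hg₀L, hderiv hg₁L, hg₀L.eq, hg₁L.eq, sub_self,
    intervalIntegral.integral_const_mul] at h
  exact (mul_eq_zero.1 h).resolve_left hκ

theorem IsHillSolution.eq_zero_of_periodic_resonant {q B g₀ g₁ : ℝ → ℝ} (hq : Continuous q)
    (hB : Continuous B) {L : ℝ} (hL : 0 < L) (hBL : Periodic B L) (hB₀ : ∀ x, 0 ≤ B x)
    (hpos : ∃ x, 0 < B x) {κ : ℝ} (hκ : κ ≠ 0) (hg₀ : IsHillSolution q 0 g₀)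
    (hg₀L : Periodic g₀ L) (hg₁ : IsHillSolution q (fun x => κ * (B x * g₀ x)) g₁)
    (hg₁L : Periodic g₁ L) : g₀ = 0 := by
  have hc := hg₀.continuous
  have hzero := hg₀.integral_mul_sq_eq_zero hB hκ hg₀L hg₁ hg₁L
  by_contra hne
  obtain ⟨δ, hδ, a, c, ha, hac, hcL, hδB⟩ := exists_Icc_le_of_periodic hB hL hBL hpos
  obtain ⟨x, hx, hgx⟩ : ∃ x ∈ Icc a c, g₀ x ≠ 0 := by
    by_contra! h
    obtain ⟨x, hx⟩ := nonempty_Ioo.2 hac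
    have hev : g₀ =ᶠ[𝓝 x] 0 :=
      eventually_of_mem (Ioo_mem_nhds hx.1 hx.2) fun y hy => h y (Ioo_subset_Icc_self hy)
    simpa [hev.eq_of_nhds, hev.deriv_eq] using hg₀.sq_add_deriv_sq_pos hq hne x
  have hBx := hδ.trans_le (hδB x hx)
  exact (intervalIntegral.integral_pos hL (by fun_prop)
    (fun y _ => mul_nonneg (hB₀ y) (sq_nonneg _))
    ⟨x, ⟨ha.trans hx.1, hx.2.trans hcL⟩, by positivity⟩).ne' hzero

/-- In the resonant case the homogeneous solution `g₀` serves as the multiplier that makes the right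
hand side solvable; the solution operator of the pair is invertible by the Fredholm alternative. -/
theorem exists_periodic_resonant_pair {q B h : ℝ → ℝ} (hq : Continuous q) (hB : Continuous B)
    (hh : Continuous h) {L : ℝ} (hL : 0 < L) (hqL : Periodic q L) (hBL : Periodic B L)
    (hhL : Periodic h L) (hB₀ : ∀ x, 0 ≤ B x) (hpos : ∃ x, 0 < B x) {κ : ℝ} (hκ : κ ≠ 0) :
    ∃ g₀ g₁, IsHillSolution q 0 g₀ ∧ Periodic g₀ L ∧
      IsHillSolution q (fun x => h x + κ * (B x * g₀ x)) g₁ ∧ Periodic g₁ L := by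
  obtain ⟨C, S, hCS⟩ := exists_isHillBasis hq
  have hCc := hCS.cos.continuous
  have hSc := hCS.sin.continuous
  obtain ⟨p, hp, -, -⟩ := exists_isHillSolution hq hh 0 0
  obtain ⟨D, hD, -, -⟩ := exists_isHillSolution hq
    (by fun_prop : Continuous fun x => κ * (B x * C x)) 0 0
  obtain ⟨R, hR, -, -⟩ := exists_isHillSolution hq
    (by fun_prop : Continuous fun x => κ * (B x * S x)) 0 0
  have hg₀ (k : ℝ × ℝ) : IsHillSolution q 0 (k.1 • C + k.2 • S) := by
    simpa using hCS.cos.lincomb hCS.sin k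
  have hg₁ (v k : ℝ × ℝ) : IsHillSolution q (fun x => κ * (B x * (k.1 • C + k.2 • S) x))
      ((v.1 • C + v.2 • S) + (k.1 • D + k.2 • R)) := by
    convert (hg₀ v).add (hD.lincomb hR k) using 1
    ext x
    simp only [Pi.add_apply, Pi.smul_apply, smul_eq_mul, Pi.zero_apply]
    ring
  have hg₀L {k : ℝ × ℝ} (hk : periodDefectMap L C S k = 0) : Periodic (k.1 • C + k.2 • S) L :=
    (hg₀ k).periodic_of_periodDefect_eq_zero hq hqL (fun _ => rfl)
      ((hCS.cos.periodDefect_lincomb hCS.sin k).trans hk)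
  have hrhsL {k : ℝ × ℝ} (hk : periodDefectMap L C S k = 0) :
      Periodic (fun x => κ * (B x * (k.1 • C + k.2 • S) x)) L :=
    fun x => by simp only [hBL x, hg₀L hk x]
  have hdefect (v k : ℝ × ℝ) : periodDefect L ((v.1 • C + v.2 • S) + (k.1 • D + k.2 • R)) =
      periodDefectMap L C S v + periodDefectMap L D R k := by
    rw [(hg₀ v).periodDefect_add (hD.lincomb hR k), hCS.cos.periodDefect_lincomb hCS.sin,
      hD.periodDefect_lincomb hR]
  obtain ⟨v, k, hk, hvk⟩ := exists_ker_generalized_preimage (periodDefectMap L C S)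
    (periodDefectMap L D R) (fun v k hk hvk => hCS.eq_zero_of_lincomb_eq_zero <|
      (hg₀ k).eq_zero_of_periodic_resonant hq hB hL hBL hB₀ hpos hκ (hg₀L hk) (hg₁ v k)
        ((hg₁ v k).periodic_of_periodDefect_eq_zero hq hqL (hrhsL hk) ((hdefect v k).trans hvk)))
    (-periodDefect L p)
  refine ⟨_, _, hg₀ k, hg₀L hk, hp.add (hg₁ v k),
    (hp.add (hg₁ v k)).periodic_of_periodDefect_eq_zero hq hqL (hhL.add (hrhsL hk)) ?_⟩
  rw [hp.periodDefect_add (hg₁ v k), hdefect, hvk, add_neg_cancel]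

end Hill

section SmoothPeriodic

open Function

/-- Smooth `2π`-periodic functions, i.e. smooth functions of the polar angle. -/
structure IsSmoothPeriodic (f : ℝ → ℝ) : Prop where
  contDiff : ContDiff ℝ (⊤ : ℕ∞) f
  periodic : Periodic f (2 * Real.pi)

namespace IsSmoothPeriodic

variable {f g : ℝ → ℝ}

theorem hasDerivAt (hf : IsSmoothPeriodic f) (x : ℝ) : HasDerivAt f (deriv f x) x :=
  (hf.contDiff.differentiable (by simp) x).hasDerivAt

theorem deriv (hf : IsSmoothPeriodic f) : IsSmoothPeriodic (deriv f) where
  contDiff := (contDiff_infty_iff_deriv.1 hf.contDiff).2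
  periodic x := by rw [← deriv_comp_add_const, funext hf.periodic]

theorem const (c : ℝ) : IsSmoothPeriodic fun _ => c := ⟨contDiff_const, fun _ => rfl⟩

theorem add (hf : IsSmoothPeriodic f) (hg : IsSmoothPeriodic g) : IsSmoothPeriodic (f + g) :=
  ⟨hf.contDiff.add hg.contDiff, hf.periodic.add hg.periodic⟩

theorem sub (hf : IsSmoothPeriodic f) (hg : IsSmoothPeriodic g) : IsSmoothPeriodic (f - g) :=
  ⟨hf.contDiff.sub hg.contDiff, hf.periodic.sub hg.periodic⟩

theorem neg (hf : IsSmoothPeriodic f) : IsSmoothPeriodic (-f) :=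
  ⟨hf.contDiff.neg, fun x => congrArg Neg.neg (hf.periodic x)⟩

theorem mul (hf : IsSmoothPeriodic f) (hg : IsSmoothPeriodic g) : IsSmoothPeriodic (f * g) :=
  ⟨hf.contDiff.mul hg.contDiff, hf.periodic.mul hg.periodic⟩

theorem const_smul (hf : IsSmoothPeriodic f) (c : ℝ) : IsSmoothPeriodic (c • f) :=
  ⟨hf.contDiff.const_smul c, hf.periodic.smul c⟩

theorem exp (hf : IsSmoothPeriodic f) : IsSmoothPeriodic fun x => Real.exp (f x) :=
  ⟨hf.contDiff.exp, hf.periodic.comp Real.exp⟩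

theorem cos : IsSmoothPeriodic Real.cos := ⟨Real.contDiff_cos, Real.cos_periodic⟩

theorem sin : IsSmoothPeriodic Real.sin := ⟨Real.contDiff_sin, Real.sin_periodic⟩

theorem deriv_const_smul (hf : IsSmoothPeriodic f) (c x : ℝ) :
    _root_.deriv (c • f) x = c * _root_.deriv f x :=
  ((hf.hasDerivAt x).const_smul c).deriv

theorem deriv_mul (hf : IsSmoothPeriodic f) (hg : IsSmoothPeriodic g) (x : ℝ) :
    _root_.deriv (f * g) x = _root_.deriv f x * g x + f x * _root_.deriv g x :=
  ((hf.hasDerivAt x).mul (hg.hasDerivAt x)).deriv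

theorem deriv_add (hf : IsSmoothPeriodic f) (hg : IsSmoothPeriodic g) (x : ℝ) :
    _root_.deriv (f + g) x = _root_.deriv f x + _root_.deriv g x :=
  ((hf.hasDerivAt x).add (hg.hasDerivAt x)).deriv

theorem deriv_sub (hf : IsSmoothPeriodic f) (hg : IsSmoothPeriodic g) (x : ℝ) :
    _root_.deriv (f - g) x = _root_.deriv f x - _root_.deriv g x :=
  ((hf.hasDerivAt x).sub (hg.hasDerivAt x)).deriv

theorem deriv_deriv_mul (hf : IsSmoothPeriodic f) (hg : IsSmoothPeriodic g) (x : ℝ) :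
    _root_.deriv (_root_.deriv (f * g)) x = _root_.deriv (_root_.deriv f) x * g x +
      2 * (_root_.deriv f x * _root_.deriv g x) + f x * _root_.deriv (_root_.deriv g) x := by
  rw [show _root_.deriv (f * g) = _ from funext (hf.deriv_mul hg)]
  exact ((((hf.deriv.hasDerivAt x).mul (hg.hasDerivAt x)).add
    ((hf.hasDerivAt x).mul (hg.deriv.hasDerivAt x))).congr_deriv (by ring)).deriv

theorem deriv_exp (hf : IsSmoothPeriodic f) (x : ℝ) :
    _root_.deriv (fun x => Real.exp (f x)) x = Real.exp (f x) * _root_.deriv f x :=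
  ((hf.hasDerivAt x).exp).deriv

end IsSmoothPeriodic

end SmoothPeriodic

section PolarSystem

open Set Function

/-- The function `P ^ (c / m)` of the angle, where the profile is written `P = exp (m p)`. -/
def expProfile (c : ℝ) (p : ℝ → ℝ) : ℝ → ℝ := fun x => Real.exp ((c • p) x)

/-- The coefficient `B` of the Hill equation, proportional to the Gauss curvature of the graph of
`r ^ m * exp (m p θ)`. -/
def curvatureCoeff (m : ℝ) (p : ℝ → ℝ) : ℝ → ℝ :=
  (m - 1)⁻¹ • ((fun _ => 1) + deriv (deriv p) + deriv p * deriv p)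

/-- The angular part of `z_tt w_ss - 2 z_st w_st + z_ss w_tt` for `z = r ^ m * P θ` and
`w = r ^ μ * f θ`. -/
def mixedHessian (m μ : ℝ) (P f : ℝ → ℝ) (x : ℝ) : ℝ :=
  m * (m - 1) * P x * (μ * f x + deriv (deriv f) x) +
    (m * P x + deriv (deriv P) x) * (μ * (μ - 1) * f x) -
    2 * (m - 1) * (μ - 1) * deriv P x * deriv f x

/-- The angular part of the source of the Darboux equation obtained from the strains `e₁`, `e₂`,
`e₃` by eliminating the tangential components of the field. -/
def polarSource (m μ : ℝ) (e₁ e₂ e₃ : ℝ → ℝ) : ℝ → ℝ :=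
  (μ + m - 1) • deriv e₂ - deriv (deriv e₁) + (μ + m - 2) • e₁ -
    ((μ + m - 2) * (μ + m - 1)) • e₃

/-- The angular parts `α`, `β`, `f` of the radial, angular and vertical components of a field over
the graph of `r ^ m * P θ` with prescribed radial, mixed and angular strains. The vertical component
is homogeneous of degree `μ`, the other two of degree `μ + m - 1`. -/
structure PolarSystem (m μ : ℝ) (P e₁ e₂ e₃ f α β : ℝ → ℝ) : Prop where
  f_smooth : IsSmoothPeriodic f
  α_smooth : IsSmoothPeriodic α
  β_smooth : IsSmoothPeriodic β
  radial : ∀ x, (μ + m - 1) * α x + m * P x * (μ * f x) = e₁ x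
  mixed : ∀ x, (μ + m - 2) * β x + deriv α x + m * P x * deriv f x + deriv P x * (μ * f x) = e₂ x
  angular : ∀ x, deriv β x + α x + deriv P x * deriv f x = e₃ x

variable {m μ : ℝ} {p P e₁ e₂ e₃ f g : ℝ → ℝ}

theorem IsSmoothPeriodic.expProfile (hp : IsSmoothPeriodic p) (c : ℝ) :
    IsSmoothPeriodic (expProfile c p) :=
  (hp.const_smul c).exp

theorem expProfile_pos (c x : ℝ) : 0 < expProfile c p x := Real.exp_pos _

theorem deriv_expProfile (hp : IsSmoothPeriodic p) (c x : ℝ) :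
    deriv (expProfile c p) x = c * deriv p x * expProfile c p x := by
  unfold expProfile
  rw [(hp.const_smul c).deriv_exp, hp.deriv_const_smul]
  ring

theorem deriv_deriv_expProfile (hp : IsSmoothPeriodic p) (c x : ℝ) :
    deriv (deriv (expProfile c p)) x =
      (c * deriv (deriv p) x + (c * deriv p x) ^ 2) * expProfile c p x := by
  rw [show deriv (expProfile c p) = _ from funext (deriv_expProfile hp c)]
  exact ((((hp.deriv.hasDerivAt x).const_mul c).mul ((hp.expProfile c).hasDerivAt x)).congr_deriv
    (by rw [deriv_expProfile hp]; ring)).deriv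

theorem IsSmoothPeriodic.curvatureCoeff (hp : IsSmoothPeriodic p) :
    IsSmoothPeriodic (curvatureCoeff m p) :=
  (((IsSmoothPeriodic.const 1).add hp.deriv.deriv).add (hp.deriv.mul hp.deriv)).const_smul _

theorem IsSmoothPeriodic.polarSource (he₁ : IsSmoothPeriodic e₁) (he₂ : IsSmoothPeriodic e₂)
    (he₃ : IsSmoothPeriodic e₃) : IsSmoothPeriodic (polarSource m μ e₁ e₂ e₃) :=
  (((he₂.deriv.const_smul _).sub he₁.deriv.deriv).add (he₁.const_smul _)).sub (he₃.const_smul _)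

theorem curvature_eq_mul_curvatureCoeff (hp : IsSmoothPeriodic p) (hm : m ≠ 1) (x : ℝ) :
    m ^ 2 * expProfile m p x ^ 2 + m * expProfile m p x * deriv (deriv (expProfile m p)) x -
      (m - 1) * deriv (expProfile m p) x ^ 2 =
    m ^ 2 * (m - 1) * expProfile m p x ^ 2 * curvatureCoeff m p x := by
  have hm' := sub_ne_zero.2 hm
  simp only [deriv_deriv_expProfile hp, deriv_expProfile hp, curvatureCoeff, Pi.smul_apply,
    Pi.add_apply, Pi.mul_apply, smul_eq_mul]
  field_simp
  ring

/-- `1 + p'' + p'²` has mean at least `1`, since `p''` integrates to zero over a period. -/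
theorem exists_curvatureCoeff_pos (hp : IsSmoothPeriodic p) (hm : 1 < m) :
    ∃ x, 0 < curvatureCoeff m p x := by
  by_contra! h
  have hle (x : ℝ) : deriv (deriv p) x ≤ -1 := by
    have := (inv_pos.2 (sub_pos.2 hm))
    have h' := h x
    simp only [curvatureCoeff, Pi.smul_apply, Pi.add_apply, Pi.mul_apply, smul_eq_mul] at h'
    nlinarith [nonpos_of_mul_nonpos_right h' this, mul_self_nonneg (deriv p x)]
  obtain ⟨x, -, hx⟩ := exists_deriv_eq_slope (deriv p) Real.two_pi_pos
    hp.deriv.contDiff.continuous.continuousOn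
    (hp.deriv.contDiff.differentiable (by simp)).differentiableOn
  rw [hp.deriv.periodic.eq, sub_self, zero_div] at hx
  linarith [hle x]

theorem mixedHessian_expProfile_mul (hp : IsSmoothPeriodic p) (hg : IsSmoothPeriodic g)
    (hm : m ≠ 1) (x : ℝ) :
    mixedHessian m μ (expProfile m p) (expProfile (μ - 1) p * g) x =
      m * (m - 1) * expProfile m p x * expProfile (μ - 1) p x *
        (deriv (deriv g) x + (1 + (μ - 1) * (μ + m - 1) * curvatureCoeff m p x) * g x) := by
  have hm' := sub_ne_zero.2 hm
  simp only [mixedHessian, (hp.expProfile _).deriv_deriv_mul hg, (hp.expProfile _).deriv_mul hg,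
    deriv_deriv_expProfile hp, deriv_expProfile hp, curvatureCoeff, Pi.smul_apply,
    Pi.add_apply, Pi.mul_apply, smul_eq_mul]
  field_simp
  ring

theorem exists_polarSystem (hd : 0 < μ + m - 2) (hP : IsSmoothPeriodic P)
    (he₁ : IsSmoothPeriodic e₁) (he₂ : IsSmoothPeriodic e₂) (hf : IsSmoothPeriodic f)
    (h : ∀ x, mixedHessian m μ P f x = polarSource m μ e₁ e₂ e₃ x) :
    ∃ α β, PolarSystem m μ P e₁ e₂ e₃ f α β := by
  have hd₁ : μ + m - 1 ≠ 0 := by linarith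
  have hd₀ := hd.ne'
  have hPf := (hP.mul hf).const_smul (m * μ)
  have hPf' := (hP.mul hf.deriv).const_smul m
  have hP'f := (hP.deriv.mul hf).const_smul μ
  let α := (μ + m - 1)⁻¹ • (e₁ - (m * μ) • (P * f))
  have hα : IsSmoothPeriodic α := (he₁.sub hPf).const_smul _
  have hβ := ((he₂.sub hα.deriv).sub hPf').sub hP'f
  refine ⟨α, (μ + m - 2)⁻¹ • (e₂ - deriv α - m • (P * deriv f) - μ • (deriv P * f)), hf, hα,
    hβ.const_smul _, fun x => ?_, fun x => ?_, fun x => ?_⟩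
  · simp only [α, Pi.smul_apply, Pi.sub_apply, Pi.mul_apply, smul_eq_mul]
    field_simp
    ring
  · simp only [Pi.smul_apply, Pi.sub_apply, Pi.mul_apply, smul_eq_mul]
    field_simp
    ring
  · have hα' : deriv α = (μ + m - 1)⁻¹ • (deriv e₁ - (m * μ) • deriv (P * f)) := by
      ext x
      rw [(he₁.sub hPf).deriv_const_smul, he₁.deriv_sub hPf, (hP.mul hf).deriv_const_smul]
      rfl
    have hPf₁ := (hP.mul hf).deriv.const_smul (m * μ)
    have hx := h x
    rw [hβ.deriv_const_smul, ((he₂.sub hα.deriv).sub hPf').deriv_sub hP'f,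
      (he₂.sub hα.deriv).deriv_sub hPf', he₂.deriv_sub hα.deriv,
      (hP.deriv.mul hf).deriv_const_smul, hP.deriv.deriv_mul hf,
      (hP.mul hf.deriv).deriv_const_smul, hP.deriv_mul hf.deriv, hα',
      (he₁.deriv.sub hPf₁).deriv_const_smul, he₁.deriv.deriv_sub hPf₁,
      (hP.mul hf).deriv.deriv_const_smul, hP.deriv_deriv_mul hf]
    simp only [α, mixedHessian, polarSource, Pi.smul_apply, Pi.sub_apply, Pi.add_apply,
      Pi.mul_apply, smul_eq_mul] at hx ⊢
    field_simp
    linear_combination -hx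

/-- The analogue of `PolarSystem` for components `r ^ μ * (f₁ θ + log r * f₀ θ)`, and likewise for
the tangential ones: the equations for the coefficients of `log r` and of `1`. -/
structure LogPolarSystem (m μ : ℝ) (P e₁ e₂ e₃ f₀ α₀ β₀ f₁ α₁ β₁ : ℝ → ℝ) : Prop where
  leading : PolarSystem m μ P 0 0 0 f₀ α₀ β₀
  remainder :
    PolarSystem m μ P (e₁ - (α₀ + m • (P * f₀))) (e₂ - (β₀ + deriv P * f₀)) e₃ f₁ α₁ β₁

theorem PolarSystem.logPolarSystem {α β : ℝ → ℝ} (h : PolarSystem m μ P e₁ e₂ e₃ f α β) :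
    LogPolarSystem m μ P e₁ e₂ e₃ 0 0 0 f α β where
  leading := ⟨.const 0, .const 0, .const 0, by simp, by simp, by simp⟩
  remainder := by simpa using h

theorem polarSource_zero : polarSource m μ 0 0 0 = 0 := by
  have : deriv (0 : ℝ → ℝ) = 0 := deriv_const' _
  simp [polarSource, this]

theorem PolarSystem.radial_add_eq {α β : ℝ → ℝ} (h : PolarSystem m μ P 0 e₂ e₃ f α β)
    (hd : μ + m - 1 ≠ 0) : α + m • (P * f) = (m * (m - 1) / (μ + m - 1)) • (P * f) := by
  ext x
  have := h.radial x
  simp only [Pi.add_apply, Pi.smul_apply, Pi.mul_apply, Pi.zero_apply, smul_eq_mul] at this ⊢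
  field_simp
  linear_combination this

/-- The terms of the first equation involving `f₀` form the derivative of `mixedHessian` in `μ`, as
`r ^ μ * log r` is the derivative of `r ^ μ`. -/
theorem exists_logPolarSystem {f₀ f₁ : ℝ → ℝ} (hd : 0 < μ + m - 2) (hP : IsSmoothPeriodic P)
    (he₁ : IsSmoothPeriodic e₁) (he₂ : IsSmoothPeriodic e₂)
    (hf₀ : IsSmoothPeriodic f₀) (hf₁ : IsSmoothPeriodic f₁)
    (h₁ : ∀ x, mixedHessian m μ P f₁ x + (m * (m - 1) * P x * f₀ x +
      (2 * μ - 1) * (m * P x + deriv (deriv P) x) * f₀ x - 2 * (m - 1) * deriv P x * deriv f₀ x) =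
        polarSource m μ e₁ e₂ e₃ x)
    (h₀ : ∀ x, mixedHessian m μ P f₀ x = 0) :
    ∃ α₀ β₀ α₁ β₁, LogPolarSystem m μ P e₁ e₂ e₃ f₀ α₀ β₀ f₁ α₁ β₁ := by
  obtain ⟨α₀, β₀, H⟩ := exists_polarSystem hd hP (.const 0) (.const 0) hf₀
    (fun x => (h₀ x).trans (congrFun polarSource_zero x).symm)
  have hPf := hP.mul hf₀
  have hα₀ := H.radial_add_eq (by linarith)
  have hE₁ := hPf.const_smul (m * (m - 1) / (μ + m - 1))
  have hE₂ := H.β_smooth.add (hP.deriv.mul hf₀)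
  suffices h : ∀ x, mixedHessian m μ P f₁ x =
      polarSource m μ (e₁ - (α₀ + m • (P * f₀))) (e₂ - (β₀ + deriv P * f₀)) e₃ x by
    obtain ⟨α₁, β₁, K⟩ := exists_polarSystem hd hP (hα₀ ▸ he₁.sub hE₁) (he₂.sub hE₂) hf₁ h
    exact ⟨α₀, β₀, α₁, β₁, H, K⟩
  intro x
  have hd₁ : μ + m - 1 ≠ 0 := by linarith
  have hE₁' : deriv (e₁ - (m * (m - 1) / (μ + m - 1)) • (P * f₀)) =
      deriv e₁ - (m * (m - 1) / (μ + m - 1)) • deriv (P * f₀) := by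
    ext x
    rw [he₁.deriv_sub hE₁, hPf.deriv_const_smul]
    rfl
  have hα := congrFun hα₀ x
  simp only [polarSource, mixedHessian, hα₀, hE₁', he₂.deriv_sub hE₂,
    H.β_smooth.deriv_add (hP.deriv.mul hf₀), hP.deriv.deriv_mul hf₀,
    he₁.deriv.deriv_sub (hPf.deriv.const_smul _), hPf.deriv.deriv_const_smul,
    hP.deriv_deriv_mul hf₀, Pi.smul_apply, Pi.sub_apply, Pi.add_apply, Pi.mul_apply,
    smul_eq_mul] at hα h₀ h₁ ⊢
  have hβ := H.angular x
  rw [Pi.zero_apply] at hβ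
  field_simp at hα ⊢
  linear_combination (μ + m - 1) * h₁ x - h₀ x + (μ + m - 1) ^ 2 * hβ - (μ + m - 1) * hα

theorem mixedHessian_expProfile_mul_add {g₀ g₁ : ℝ → ℝ} (hp : IsSmoothPeriodic p)
    (hg₀ : IsSmoothPeriodic g₀) (hg₁ : IsSmoothPeriodic g₁) (hm : m ≠ 1)
    (h : ∀ x, deriv (deriv g₀) x =
      -((1 + (μ - 1) * (μ + m - 1) * curvatureCoeff m p x) * g₀ x)) (x : ℝ) :
    mixedHessian m μ (expProfile m p) (expProfile (μ - 1) p * (g₁ + p * g₀)) x +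
        (m * (m - 1) * expProfile m p x * (expProfile (μ - 1) p * g₀) x +
          (2 * μ - 1) * (m * expProfile m p x + deriv (deriv (expProfile m p)) x) *
            (expProfile (μ - 1) p * g₀) x -
          2 * (m - 1) * deriv (expProfile m p) x * deriv (expProfile (μ - 1) p * g₀) x) =
      m * (m - 1) * expProfile m p x * expProfile (μ - 1) p x *
        (deriv (deriv g₁) x + (1 + (μ - 1) * (μ + m - 1) * curvatureCoeff m p x) * g₁ x +
          (2 * μ + m - 2) * (curvatureCoeff m p x * g₀ x)) := by
  have hm' := sub_ne_zero.2 hm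
  have hpg := hp.mul hg₀
  rw [mixedHessian_expProfile_mul hp (hg₁.add hpg) hm,
    show deriv (g₁ + p * g₀) = deriv g₁ + deriv (p * g₀) from funext (hg₁.deriv_add hpg),
    Pi.add_apply, Pi.mul_apply, hg₁.deriv.deriv_add hpg.deriv, hp.deriv_deriv_mul hg₀, h,
    (hp.expProfile _).deriv_mul hg₀, deriv_deriv_expProfile hp, deriv_expProfile hp,
    deriv_expProfile hp]
  simp only [curvatureCoeff, Pi.smul_apply, Pi.add_apply, Pi.mul_apply, smul_eq_mul]
  field_simp
  ring

theorem expProfile_mul_inv (a b x : ℝ) :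
    expProfile a p x * expProfile b p x * expProfile (-(a + b)) p x = 1 := by
  simp only [expProfile, ← Real.exp_add, Pi.smul_apply, smul_eq_mul]
  ring_nf
  exact Real.exp_zero

theorem isSmoothPeriodic_hillPotential (hp : IsSmoothPeriodic p) (ν : ℝ) :
    IsSmoothPeriodic fun x => 1 + ν * curvatureCoeff m p x :=
  (IsSmoothPeriodic.const 1).add (hp.curvatureCoeff.const_smul ν)

/-- Where the resonance of the homogeneous equation obstructs a homogeneous solution, a logarithmic
term removes the obstruction. -/
theorem exists_logPolarSystem_expProfile (hp : IsSmoothPeriodic p) (hm : 1 < m)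
    (hB : ∀ x, 0 ≤ curvatureCoeff m p x) (hd : 0 < μ + m - 2) (hκ : 2 * μ + m - 2 ≠ 0)
    (he₁ : IsSmoothPeriodic e₁) (he₂ : IsSmoothPeriodic e₂) (he₃ : IsSmoothPeriodic e₃) :
    ∃ f₀ α₀ β₀ f₁ α₁ β₁,
      LogPolarSystem m μ (expProfile m p) e₁ e₂ e₃ f₀ α₀ β₀ f₁ α₁ β₁ := by
  have hBs := hp.curvatureCoeff (m := m)
  have hq := isSmoothPeriodic_hillPotential (m := m) hp ((μ - 1) * (μ + m - 1))
  let h := (m * (m - 1))⁻¹ • (polarSource m μ e₁ e₂ e₃ * expProfile (-(m + (μ - 1))) p)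
  have hh : IsSmoothPeriodic h :=
    ((he₁.polarSource he₂ he₃).mul (hp.expProfile _)).const_smul _
  obtain ⟨g₀, g₁, H₀, hg₀, H₁, hg₁⟩ := exists_periodic_resonant_pair hq.contDiff.continuous
    hBs.contDiff.continuous hh.contDiff.continuous Real.two_pi_pos hq.periodic hBs.periodic
    hh.periodic hB (exists_curvatureCoeff_pos hp hm) (neg_ne_zero.2 hκ)
  have hS₀ : IsSmoothPeriodic g₀ := ⟨H₀.contDiff hq.contDiff contDiff_const, hg₀⟩
  have hS₁ : IsSmoothPeriodic g₁ :=
    ⟨H₁.contDiff hq.contDiff (hh.add ((hBs.mul hS₀).const_smul _)).contDiff, hg₁⟩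
  have hE := hp.expProfile (μ - 1)
  have hg₀' (x : ℝ) : deriv (deriv g₀) x =
      -((1 + (μ - 1) * (μ + m - 1) * curvatureCoeff m p x) * g₀ x) :=
    (H₀.hasDerivAt_deriv x).deriv.trans (zero_sub _)
  have hf₀ (x : ℝ) : mixedHessian m μ (expProfile m p) (expProfile (μ - 1) p * g₀) x = 0 := by
    rw [mixedHessian_expProfile_mul hp hS₀ hm.ne', hg₀']
    ring
  obtain ⟨α₀, β₀, α₁, β₁, H⟩ := exists_logPolarSystem hd (hp.expProfile m) he₁ he₂ (hE.mul hS₀)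
    (hE.mul (hS₁.add (hp.mul hS₀))) (fun x => by
      rw [mixedHessian_expProfile_mul_add hp hS₀ hS₁ hm.ne' hg₀', (H₁.hasDerivAt_deriv x).deriv]
      have hm₀ : m ≠ 0 := by linarith
      have hm₁ : m - 1 ≠ 0 := by linarith
      simp only [h, Pi.smul_apply, Pi.mul_apply, smul_eq_mul]
      field_simp
      linear_combination polarSource m μ e₁ e₂ e₃ x * expProfile_mul_inv m (μ - 1) x) hf₀
  exact ⟨_, _, _, _, _, _, H⟩

theorem exists_polarSystem_zero_expProfile (hp : IsSmoothPeriodic p) (hm : 1 < m)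
    (hB : ∀ x, 0 ≤ curvatureCoeff m p x) (N : ℝ) :
    ∃ l ≥ N, ∃ f ≠ 0, ∃ α β, PolarSystem m l (expProfile m p) 0 0 0 f α β := by
  have hBs := hp.curvatureCoeff (m := m)
  obtain ⟨M, hNM, hM⟩ : ∃ M, N ≤ M ∧ 1 ≤ M := ⟨max N 1, le_max_left _ _, le_max_right _ _⟩
  obtain ⟨ν, hν, g, hg, H, hgL⟩ := exists_periodic_isHillSolution_large hBs.contDiff.continuous
    Real.two_pi_pos hBs.periodic hB (exists_curvatureCoeff_pos hp hm) ((M - 1) * (M + m - 1))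
  have hν₀ : 0 ≤ ν := (mul_nonneg (by linarith) (by linarith)).trans hν
  let l := -(m - 2) / 2 + √(ν + m ^ 2 / 4)
  have hl : l = -(m - 2) / 2 + √(ν + m ^ 2 / 4) := rfl
  have hlν : (l - 1) * (l + m - 1) = ν := by
    linear_combination Real.sq_sqrt (show 0 ≤ ν + m ^ 2 / 4 by positivity)
  have hMl : M ≤ l := by
    have : M + (m - 2) / 2 ≤ √(ν + m ^ 2 / 4) := Real.le_sqrt_of_sq_le (by nlinarith)
    linarith
  have hS : IsSmoothPeriodic g :=
    ⟨H.contDiff (isSmoothPeriodic_hillPotential hp ν).contDiff contDiff_const, hgL⟩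
  have hE := hp.expProfile (l - 1)
  obtain ⟨α, β, K⟩ := exists_polarSystem (m := m) (μ := l) (e₃ := 0) (by linarith)
    (hp.expProfile m) (.const 0) (.const 0) (hE.mul hS) fun x => by
      rw [mixedHessian_expProfile_mul hp hS hm.ne', (H.hasDerivAt_deriv x).deriv, hlν]
      exact (by simp : _ = (0 : ℝ)).trans (congrFun polarSource_zero x).symm
  refine ⟨l, hNM.trans hMl, _, fun h => hg ?_, α, β, K⟩
  ext x
  exact (mul_eq_zero.1 (congrFun h x)).resolve_left (expProfile_pos _ _).ne'

theorem exists_isSmoothPeriodic_eq_expProfile (hP : IsSmoothPeriodic P) (hpos : ∀ x, 0 < P x)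
    (hm : m ≠ 0) : ∃ p, IsSmoothPeriodic p ∧ P = expProfile m p := by
  have hlog : IsSmoothPeriodic fun x => Real.log (P x) :=
    ⟨hP.contDiff.log fun x => (hpos x).ne', hP.periodic.comp Real.log⟩
  refine ⟨_, hlog.const_smul m⁻¹, funext fun x => ?_⟩
  simp only [expProfile, smul_inv_smul₀ hm, Real.exp_log (hpos x)]

end PolarSystem

section LogHomogeneous

open Filter Topology Function Asymptotics

/-- The linear form `a ds + b dt` on the plane. -/
def planeCovector (a b : ℝ) : ℝ × ℝ →L[ℝ] ℝ :=
  a • ContinuousLinearMap.fst ℝ ℝ ℝ + b • ContinuousLinearMap.snd ℝ ℝ ℝ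

/-- Functions on the plane of the form `r ^ a * (F θ + log r * G θ)` in polar coordinates, with no
condition at the origin. -/
structure IsLogHomogeneous (a : ℝ) (F G : ℝ → ℝ) (φ : ℝ × ℝ → ℝ) : Prop where
  F_smooth : IsSmoothPeriodic F
  G_smooth : IsSmoothPeriodic G
  apply : ∀ r : ℝ, 0 < r → ∀ θ : ℝ,
    φ (r * Real.cos θ, r * Real.sin θ) = r ^ a * (F θ + Real.log r * G θ)

/-- The angular part of the `s`-derivative of `r ^ a * (F θ + log r * G θ)`; the coefficient of
`log r` in that derivative is `angularDs a G 0`. -/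
def angularDs (a : ℝ) (F G : ℝ → ℝ) : ℝ → ℝ :=
  Real.cos * (a • F + G) - Real.sin * deriv F

/-- The angular part of the `t`-derivative of `r ^ a * (F θ + log r * G θ)`; the coefficient of
`log r` in that derivative is `angularDt a G 0`. -/
def angularDt (a : ℝ) (F G : ℝ → ℝ) : ℝ → ℝ :=
  Real.sin * (a • F + G) + Real.cos * deriv F

variable {a : ℝ} {F G : ℝ → ℝ} {φ : ℝ × ℝ → ℝ}

theorem planeCovector_apply (a b : ℝ) (v : ℝ × ℝ) : planeCovector a b v = a * v.1 + b * v.2 := by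
  simp [planeCovector]

theorem IsSmoothPeriodic.angularDs (hF : IsSmoothPeriodic F) (hG : IsSmoothPeriodic G) :
    IsSmoothPeriodic (angularDs a F G) :=
  (cos.mul ((hF.const_smul a).add hG)).sub (sin.mul hF.deriv)

theorem IsSmoothPeriodic.angularDt (hF : IsSmoothPeriodic F) (hG : IsSmoothPeriodic G) :
    IsSmoothPeriodic (angularDt a F G) :=
  (sin.mul ((hF.const_smul a).add hG)).add (cos.mul hF.deriv)

theorem IsSmoothPeriodic.apply_eq_of_coe_angle_eq (hF : IsSmoothPeriodic F) {x y : ℝ}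
    (h : (x : Real.Angle) = y) : F x = F y := by
  obtain ⟨k, hk⟩ := Real.Angle.angle_eq_iff_two_pi_dvd_sub.1 h
  rw [sub_eq_iff_eq_add.1 hk, add_comm, mul_comm, hF.periodic.int_mul k y]

theorem exists_polar_coordinates {p : ℝ × ℝ} (hp : p ≠ 0) :
    ∃ r > 0, ∃ θ : ℝ, p = (r * Real.cos θ, r * Real.sin θ) := by
  let z : ℂ := Complex.equivRealProd.symm p
  have hz : z ≠ 0 := fun h => hp <| by
    rw [← Complex.equivRealProd.apply_symm_apply p]
    change Complex.equivRealProd z = 0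
    rw [h]
    rfl
  exact ⟨‖z‖, norm_pos_iff.2 hz, z.arg,
    Prod.ext (Complex.norm_mul_cos_arg z).symm (Complex.norm_mul_sin_arg z).symm⟩

theorem equivRealProdCLM_symm_polar (r θ : ℝ) :
    Complex.equivRealProdCLM.symm (r * Real.cos θ, r * Real.sin θ) =
      r * (Complex.cos θ + Complex.sin θ * Complex.I) := by
  rw [Complex.equivRealProdCLM_symm_apply]
  push_cast
  ring

theorem norm_equivRealProdCLM_symm_polar {r : ℝ} (hr : 0 < r) (θ : ℝ) :
    ‖Complex.equivRealProdCLM.symm (r * Real.cos θ, r * Real.sin θ)‖ = r := by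
  rw [equivRealProdCLM_symm_polar, norm_mul, Complex.norm_cos_add_sin_mul_I, mul_one,
    Complex.norm_of_nonneg hr.le]

theorem exists_isLogHomogeneous (ha : a ≠ 0) (hF : IsSmoothPeriodic F)
    (hG : IsSmoothPeriodic G) : ∃ φ, IsLogHomogeneous a F G φ ∧ φ 0 = 0 := by
  let z (p : ℝ × ℝ) : ℂ := Complex.equivRealProdCLM.symm p
  refine ⟨fun p => ‖z p‖ ^ a * (F (z p).arg + Real.log ‖z p‖ * G (z p).arg),
    ⟨hF, hG, fun r hr θ => ?_⟩, by simp [z, Real.zero_rpow ha]⟩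
  have harg : ((z (r * Real.cos θ, r * Real.sin θ)).arg : Real.Angle) = θ := by
    have := Complex.arg_mul_cos_add_sin_mul_I_coe_angle hr θ
    simpa only [z, equivRealProdCLM_symm_polar, Real.Angle.cos_coe, Real.Angle.sin_coe,
      Complex.ofReal_cos, Complex.ofReal_sin] using this
  simp only [z, norm_equivRealProdCLM_symm_polar hr]
  rw [hF.apply_eq_of_coe_angle_eq harg, hG.apply_eq_of_coe_angle_eq harg]

theorem exists_hasDerivAt_localInverse_exp (w : ℂ) :
    ∃ L : ℂ → ℂ, L (Complex.exp w) = w ∧ HasDerivAt L (Complex.exp w)⁻¹ (Complex.exp w) ∧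
      ∀ᶠ ζ in 𝓝 (Complex.exp w), Complex.exp (L ζ) = ζ := by
  have hexp := Complex.hasStrictDerivAt_exp w
  have hne := Complex.exp_ne_zero w
  exact ⟨hexp.localInverse _ _ _ hne, (hexp.eventually_left_inverse hne).self_of_nhds,
    (hexp.to_localInverse hne).hasDerivAt, hexp.eventually_right_inverse hne⟩

theorem exists_hasFDerivAt_polar_coordinates {r : ℝ} (hr : 0 < r) (θ : ℝ) :
    ∃ σ Θ : ℝ × ℝ → ℝ, σ (r * Real.cos θ, r * Real.sin θ) = Real.log r ∧
      Θ (r * Real.cos θ, r * Real.sin θ) = θ ∧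
      HasFDerivAt σ (planeCovector (Real.cos θ / r) (Real.sin θ / r))
        (r * Real.cos θ, r * Real.sin θ) ∧
      HasFDerivAt Θ (planeCovector (-Real.sin θ / r) (Real.cos θ / r))
        (r * Real.cos θ, r * Real.sin θ) ∧
      ∀ᶠ p in 𝓝 (r * Real.cos θ, r * Real.sin θ),
        p = (Real.exp (σ p) * Real.cos (Θ p), Real.exp (σ p) * Real.sin (Θ p)) := by
  -- Local polar coordinates are a local inverse of the complex exponential.
  set p₀ : ℝ × ℝ := (r * Real.cos θ, r * Real.sin θ)
  let z := Complex.equivRealProdCLM.symm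
  let w : ℂ := ⟨Real.log r, θ⟩
  have hw : z p₀ = Complex.exp w := by
    apply Complex.ext <;> simp [z, w, p₀, Complex.exp_re, Complex.exp_im, Real.exp_log hr]
  obtain ⟨L, hLw, hL, hinv⟩ := exists_hasDerivAt_localInverse_exp w
  have hinv_exp : (Complex.exp w)⁻¹ = ⟨Real.cos θ / r, -Real.sin θ / r⟩ := by
    rw [← Complex.exp_neg]
    apply Complex.ext <;>
      simp [w, Complex.exp_re, Complex.exp_im, Real.exp_neg, Real.exp_log hr] <;> ring
  rw [hinv_exp] at hL
  rw [← hw] at hLw hL hinv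
  have hLz := (hL.hasFDerivAt.restrictScalars ℝ).comp p₀ z.hasFDerivAt
  refine ⟨fun p => (L (z p)).re, fun p => (L (z p)).im, congrArg Complex.re hLw,
    congrArg Complex.im hLw,
    (Complex.reCLM.hasFDerivAt.comp p₀ hLz).congr_fderiv ?_,
    (Complex.imCLM.hasFDerivAt.comp p₀ hLz).congr_fderiv ?_, ?_⟩
  · ext <;> simp [z, planeCovector, neg_div]
  · ext <;> simp [z, planeCovector]
  · filter_upwards [z.continuous.continuousAt.eventually hinv] with p hp
    rw [← Complex.exp_re, ← Complex.exp_im, hp]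
    exact Prod.ext (by simp [z]) (by simp [z])

theorem IsLogHomogeneous.hasFDerivAt (h : IsLogHomogeneous a F G φ) {r : ℝ} (hr : 0 < r) (θ : ℝ) :
    HasFDerivAt φ (planeCovector
      (r ^ (a - 1) * (angularDs a F G θ + Real.log r * angularDs a G 0 θ))
      (r ^ (a - 1) * (angularDt a F G θ + Real.log r * angularDt a G 0 θ)))
      (r * Real.cos θ, r * Real.sin θ) := by
  obtain ⟨σ, Θ, hσ₀, hΘ₀, hσ, hΘ, hpolar⟩ := exists_hasFDerivAt_polar_coordinates hr θ
  have hφ : φ =ᶠ[𝓝 (r * Real.cos θ, r * Real.sin θ)]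
      fun p => Real.exp (a * σ p) * (F (Θ p) + σ p * G (Θ p)) := by
    filter_upwards [hpolar] with p hp
    have := h.apply (Real.exp (σ p)) (Real.exp_pos _) (Θ p)
    rwa [← hp, Real.log_exp, ← Real.exp_mul, mul_comm (σ p) a] at this
  have hF := (hΘ₀ ▸ h.F_smooth.hasDerivAt θ).comp_hasFDerivAt _ hΘ
  have hG := (hΘ₀ ▸ h.G_smooth.hasDerivAt θ).comp_hasFDerivAt _ hΘ
  have hexp : Real.exp (a * Real.log r) = r ^ (a - 1) * r := by
    rw [Real.rpow_sub_one hr.ne', Real.rpow_def_of_pos hr, mul_comm a, div_mul_cancel₀ _ hr.ne']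
  refine ((((hσ.const_mul a).exp).mul (hF.add (hσ.mul hG))).congr_of_eventuallyEq
    hφ).congr_fderiv ?_
  ext <;> simp [planeCovector, angularDs, angularDt, hσ₀, hΘ₀, hexp] <;> field_simp <;> ring

theorem IsLogHomogeneous.differentiableAt (h : IsLogHomogeneous a F G φ) {p : ℝ × ℝ}
    (hp : p ≠ 0) : DifferentiableAt ℝ φ p := by
  obtain ⟨r, hr, θ, rfl⟩ := exists_polar_coordinates hp
  exact (h.hasFDerivAt hr θ).differentiableAt

theorem pds_eq_fderiv {p : ℝ × ℝ} (h : DifferentiableAt ℝ φ p) :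
    pds φ p = fderiv ℝ φ p (1, 0) :=
  (h.hasFDerivAt.comp_hasDerivAt (f := fun s : ℝ => (s, p.2)) p.1
    ((hasDerivAt_id p.1).prodMk (hasDerivAt_const p.1 p.2))).deriv

theorem pdt_eq_fderiv {p : ℝ × ℝ} (h : DifferentiableAt ℝ φ p) :
    pdt φ p = fderiv ℝ φ p (0, 1) :=
  (h.hasFDerivAt.comp_hasDerivAt (f := fun t : ℝ => (p.1, t)) p.2
    ((hasDerivAt_const p.2 p.1).prodMk (hasDerivAt_id p.2))).deriv

theorem IsLogHomogeneous.pds (h : IsLogHomogeneous a F G φ) :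
    IsLogHomogeneous (a - 1) (angularDs a F G) (angularDs a G 0) (pds φ) where
  F_smooth := h.F_smooth.angularDs h.G_smooth
  G_smooth := h.G_smooth.angularDs (.const 0)
  apply r hr θ := by
    have hD := h.hasFDerivAt hr θ
    rw [pds_eq_fderiv hD.differentiableAt, hD.fderiv, planeCovector_apply]
    ring

theorem IsLogHomogeneous.pdt (h : IsLogHomogeneous a F G φ) :
    IsLogHomogeneous (a - 1) (angularDt a F G) (angularDt a G 0) (pdt φ) where
  F_smooth := h.F_smooth.angularDt h.G_smooth
  G_smooth := h.G_smooth.angularDt (.const 0)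
  apply r hr θ := by
    have hD := h.hasFDerivAt hr θ
    rw [pdt_eq_fderiv hD.differentiableAt, hD.fderiv, planeCovector_apply]
    ring

theorem IsSmoothPeriodic.exists_abs_le (hF : IsSmoothPeriodic F) : ∃ M, ∀ x, |F x| ≤ M := by
  obtain ⟨M, hM⟩ := isBounded_iff_forall_norm_le.1
    (hF.periodic.isBounded_of_continuous Real.two_pi_pos.ne' hF.contDiff.continuous)
  exact ⟨M, fun x => hM _ (Set.mem_range_self x)⟩

theorem tendsto_rpow_mul_add_abs_log_mul (ha : 0 < a) (M K : ℝ) :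
    Tendsto (fun r : ℝ => r ^ a * M + |Real.log r * r ^ a| * K) (𝓝[>] 0) (𝓝 0) := by
  have hpow : Tendsto (fun r : ℝ => r ^ a) (𝓝[>] 0) (𝓝 0) := by
    have := (Real.continuousAt_rpow_const 0 a (Or.inr ha.le)).tendsto
    rw [Real.zero_rpow ha.ne'] at this
    exact this.mono_left nhdsWithin_le_nhds
  simpa using (hpow.mul_const M).add ((tendsto_log_mul_rpow_nhdsGT_zero ha).abs.mul_const K)

theorem IsLogHomogeneous.isLittleO (h : IsLogHomogeneous a F G φ) (h₀ : φ 0 = 0) {c : ℝ}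
    (hc : c < a) : φ =o[𝓝 0] fun p => ‖Complex.equivRealProdCLM.symm p‖ ^ c := by
  obtain ⟨M, hM⟩ : ∃ M, ∀ x, |F x| ≤ M := h.F_smooth.exists_abs_le
  obtain ⟨K, hK⟩ : ∃ K, ∀ x, |G x| ≤ K := h.G_smooth.exists_abs_le
  have hlim := tendsto_rpow_mul_add_abs_log_mul (sub_pos.2 hc) M K
  have hnorm : Tendsto (fun p => ‖Complex.equivRealProdCLM.symm p‖) (𝓝 0) (𝓝 0) := by
    simpa using (Complex.equivRealProdCLM.symm.continuous.norm).tendsto 0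
  refine isLittleO_iff.2 fun ε hε => ?_
  filter_upwards [hnorm.eventually
    (eventually_nhdsWithin_iff.1 (hlim.eventually_lt_const hε))] with p hp
  rcases eq_or_ne p 0 with rfl | hp₀
  · rw [h₀, norm_zero]
    positivity
  obtain ⟨r, hr, θ, rfl⟩ := exists_polar_coordinates hp₀
  rw [norm_equivRealProdCLM_symm_polar hr] at hp ⊢
  have hrc : 0 < r ^ c := Real.rpow_pos_of_pos hr c
  have hrac : 0 < r ^ (a - c) := Real.rpow_pos_of_pos hr _
  have hra : r ^ a = r ^ (a - c) * r ^ c := by rw [← Real.rpow_add hr, sub_add_cancel]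
  rw [h.apply r hr θ, Real.norm_eq_abs, Real.norm_of_nonneg hrc.le]
  calc |r ^ a * (F θ + Real.log r * G θ)|
      = |r ^ (a - c) * F θ + Real.log r * r ^ (a - c) * G θ| * r ^ c := by
        rw [← abs_of_pos hrc, ← abs_mul, hra]
        ring_nf
    _ ≤ (r ^ (a - c) * M + |Real.log r * r ^ (a - c)| * K) * r ^ c := by
        gcongr
        refine (abs_add_le _ _).trans ?_
        rw [abs_mul, abs_mul _ (G θ), abs_of_pos hrac]
        gcongr
        exacts [hM θ, hK θ]
    _ ≤ ε * r ^ c := by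
        gcongr
        exact (hp hr).le

theorem IsLogHomogeneous.hasFDerivAt_zero (h : IsLogHomogeneous a F G φ) (h₀ : φ 0 = 0)
    (ha : 1 < a) : HasFDerivAt φ (0 : ℝ × ℝ →L[ℝ] ℝ) 0 := by
  have hsmall := h.isLittleO h₀ ha
  simp only [Real.rpow_one] at hsmall
  rw [hasFDerivAt_iff_isLittleO_nhds_zero]
  simpa [h₀] using hsmall.trans_isBigO
    (Complex.equivRealProdCLM.symm.toContinuousLinearMap.isBigO_id (𝓝 0)).norm_left

theorem IsLogHomogeneous.differentiable (h : IsLogHomogeneous a F G φ) (h₀ : φ 0 = 0)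
    (ha : 1 < a) : Differentiable ℝ φ := fun p => by
  rcases eq_or_ne p 0 with rfl | hp
  exacts [(h.hasFDerivAt_zero h₀ ha).differentiableAt, h.differentiableAt hp]

theorem fderiv_eq_pds_add_pdt (h : Differentiable ℝ φ) :
    fderiv ℝ φ = fun p => pds φ p • ContinuousLinearMap.fst ℝ ℝ ℝ +
      pdt φ p • ContinuousLinearMap.snd ℝ ℝ ℝ := by
  funext p
  rw [pds_eq_fderiv (h p), pdt_eq_fderiv (h p)]
  ext <;> simp

theorem IsLogHomogeneous.contDiff (k : ℕ) (h : IsLogHomogeneous a F G φ) (h₀ : φ 0 = 0)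
    (hk : k < a) : ContDiff ℝ k φ := by
  induction k generalizing a F G φ with
  | zero =>
    refine contDiff_zero.2 (continuous_iff_continuousAt.2 fun p => ?_)
    rcases eq_or_ne p 0 with rfl | hp
    · have hsmall := h.isLittleO h₀ (c := 0) (by simpa using hk)
      simp only [Real.rpow_zero] at hsmall
      rw [ContinuousAt, h₀]
      exact isLittleO_one_iff ℝ |>.1 hsmall
    · exact (h.differentiableAt hp).continuousAt
  | succ k ih =>
    push_cast at hk ⊢
    have ha : 1 < a := by linarith [k.cast_nonneg (α := ℝ)]
    have hd := h.differentiable h₀ ha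
    have hD := (h.hasFDerivAt_zero h₀ ha).fderiv
    refine contDiff_succ_iff_fderiv.2 ⟨hd, by simp, ?_⟩
    rw [fderiv_eq_pds_add_pdt hd]
    refine ((ih h.pds ?_ (by linarith)).smul contDiff_const).add
      ((ih h.pdt ?_ (by linarith)).smul contDiff_const)
    · rw [pds_eq_fderiv (hd 0), hD, _root_.zero_apply]
    · rw [pdt_eq_fderiv (hd 0), hD, _root_.zero_apply]

end LogHomogeneous

section BendingFields

open Function

/-- The symmetric form `dU · dV` of two vector fields on the plane, as the triple of its
coefficients of `ds²`, `ds dt` and `dt²`. -/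
def dDot (U V : ℝ × ℝ → Fin 3 → ℝ) (p : ℝ × ℝ) : Fin 3 → ℝ :=
  ![dot3 (vds U p) (vds V p), dot3 (vds U p) (vdt V p) + dot3 (vdt U p) (vds V p),
    dot3 (vdt U p) (vdt V p)]

/-- The position vector of the graph of `z`. -/
def graphMap (z : ℝ × ℝ → ℝ) (p : ℝ × ℝ) : Fin 3 → ℝ := ![p.1, p.2, z p]

/-- The form `dφ²`, in the encoding of `dDot`. -/
def dSq (φ : ℝ × ℝ → ℝ) (p : ℝ × ℝ) : Fin 3 → ℝ :=
  ![pds φ p ^ 2, 2 * pds φ p * pdt φ p, pdt φ p ^ 2]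

/-- The form `Q`, in the encoding of `dDot`, equals
`r ^ d * (e₁ θ dr² + e₂ θ r dr dθ + e₃ θ r² dθ²)` in polar coordinates. -/
def IsPolarForm (d : ℝ) (e₁ e₂ e₃ : ℝ → ℝ) (Q : ℝ × ℝ → Fin 3 → ℝ) : Prop :=
  ∀ r : ℝ, 0 < r → ∀ θ : ℝ, Q (r * Real.cos θ, r * Real.sin θ) = r ^ d •
    ![Real.cos θ ^ 2 * e₁ θ - Real.cos θ * Real.sin θ * e₂ θ + Real.sin θ ^ 2 * e₃ θ,
      2 * Real.cos θ * Real.sin θ * e₁ θ + (Real.cos θ ^ 2 - Real.sin θ ^ 2) * e₂ θ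
        - 2 * Real.cos θ * Real.sin θ * e₃ θ,
      Real.sin θ ^ 2 * e₁ θ + Real.cos θ * Real.sin θ * e₂ θ + Real.cos θ ^ 2 * e₃ θ]

/-- A symmetric form, in the encoding of `dDot`, that is homogeneous of degree `d` with smooth
coefficients in polar coordinates. -/
def IsHomogeneousForm (d : ℝ) (Q : ℝ × ℝ → Fin 3 → ℝ) : Prop :=
  ∃ e₁ e₂ e₃, IsSmoothPeriodic e₁ ∧ IsSmoothPeriodic e₂ ∧ IsSmoothPeriodic e₃ ∧
    IsPolarForm d e₁ e₂ e₃ Q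

/-- The first Cartesian component of the vector with radial component `α` and angular
component `β` in the direction `θ`. -/
def rotateFst (α β : ℝ → ℝ) : ℝ → ℝ := Real.cos * α - Real.sin * β

/-- The second Cartesian component of the vector with radial component `α` and angular
component `β` in the direction `θ`. -/
def rotateSnd (α β : ℝ → ℝ) : ℝ → ℝ := Real.sin * α + Real.cos * β

variable {a m μ : ℝ} {F P e₁ e₂ e₃ f₀ α₀ β₀ f₁ α₁ β₁ : ℝ → ℝ} {φ z u v w : ℝ × ℝ → ℝ}

theorem IsPolarForm.add {d : ℝ} {e₁' e₂' e₃' : ℝ → ℝ} {Q Q' : ℝ × ℝ → Fin 3 → ℝ}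
    (h : IsPolarForm d e₁ e₂ e₃ Q) (h' : IsPolarForm d e₁' e₂' e₃' Q') :
    IsPolarForm d (e₁ + e₁') (e₂ + e₂') (e₃ + e₃') (Q + Q') := fun r hr θ => by
  rw [Pi.add_apply, h r hr θ, h' r hr θ, ← smul_add]
  congr 1
  ext i
  fin_cases i <;> simp <;> ring

theorem IsPolarForm.neg {d : ℝ} {Q : ℝ × ℝ → Fin 3 → ℝ} (h : IsPolarForm d e₁ e₂ e₃ Q) :
    IsPolarForm d (-e₁) (-e₂) (-e₃) (-Q) := fun r hr θ => by
  rw [Pi.neg_apply, h r hr θ, ← smul_neg]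
  congr 1
  ext i
  fin_cases i <;> simp <;> ring

theorem IsPolarForm.eq_of_ne_zero {d : ℝ} {Q Q' : ℝ × ℝ → Fin 3 → ℝ}
    (h : IsPolarForm d e₁ e₂ e₃ Q) (h' : IsPolarForm d e₁ e₂ e₃ Q') {p : ℝ × ℝ} (hp : p ≠ 0) :
    Q p = Q' p := by
  obtain ⟨r, hr, θ, rfl⟩ := exists_polar_coordinates hp
  rw [h r hr θ, h' r hr θ]

theorem IsLogHomogeneous.isPolarForm_dSq (h : IsLogHomogeneous a F 0 φ) :
    IsPolarForm (2 * (a - 1)) (a ^ 2 • (F * F)) ((2 * a) • (F * deriv F)) (deriv F * deriv F)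
      (dSq φ) := fun r hr θ => by
  have hpow : r ^ (2 * (a - 1)) = r ^ (a - 1) * r ^ (a - 1) := by
    rw [two_mul, Real.rpow_add hr]
  rw [dSq, h.pds.apply r hr, h.pdt.apply r hr, hpow]
  ext i
  fin_cases i <;> simp [angularDs, angularDt] <;> ring

theorem IsHomogeneousForm.add {d : ℝ} {Q Q' : ℝ × ℝ → Fin 3 → ℝ} (h : IsHomogeneousForm d Q)
    (h' : IsHomogeneousForm d Q') : IsHomogeneousForm d (Q + Q') :=
  let ⟨_, _, _, h₁, h₂, h₃, hQ⟩ := h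
  let ⟨_, _, _, h₁', h₂', h₃', hQ'⟩ := h'
  ⟨_, _, _, h₁.add h₁', h₂.add h₂', h₃.add h₃', hQ.add hQ'⟩

theorem IsHomogeneousForm.neg {d : ℝ} {Q : ℝ × ℝ → Fin 3 → ℝ} (h : IsHomogeneousForm d Q) :
    IsHomogeneousForm d (-Q) :=
  let ⟨_, _, _, h₁, h₂, h₃, hQ⟩ := h
  ⟨_, _, _, h₁.neg, h₂.neg, h₃.neg, hQ.neg⟩

theorem IsLogHomogeneous.isHomogeneousForm_dSq (h : IsLogHomogeneous a F 0 φ) :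
    IsHomogeneousForm (2 * (a - 1)) (dSq φ) :=
  have hF := h.F_smooth
  ⟨_, _, _, (hF.mul hF).const_smul _, (hF.mul hF.deriv).const_smul _, hF.deriv.mul hF.deriv,
    h.isPolarForm_dSq⟩

theorem vds_vec (p : ℝ × ℝ) : vds (fun p => ![u p, v p, w p]) p = ![pds u p, pds v p, pds w p] := by
  funext i
  fin_cases i <;> rfl

theorem vdt_vec (p : ℝ × ℝ) : vdt (fun p => ![u p, v p, w p]) p = ![pdt u p, pdt v p, pdt w p] := by
  funext i
  fin_cases i <;> rfl

theorem dDot_self_vec : dDot (fun p => ![u p, v p, w p]) (fun p => ![u p, v p, w p]) =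
    dSq u + dSq v + dSq w := by
  funext p i
  rw [dDot, vds_vec, vdt_vec]
  fin_cases i <;> simp [dot3, dSq] <;> ring

theorem dDot_graphMap_vec (p : ℝ × ℝ) : dDot (graphMap z) (fun p => ![u p, v p, w p]) p =
    ![pds u p + pds z p * pds w p,
      pdt u p + pds v p + (pds z p * pdt w p + pdt z p * pds w p),
      pdt v p + pdt z p * pdt w p] := by
  unfold graphMap
  rw [dDot, vds_vec, vdt_vec, vds_vec, vdt_vec]
  funext i
  fin_cases i <;> simp [dot3, pds, pdt]
  ring

theorem dDot_add_right {R U V : ℝ × ℝ → Fin 3 → ℝ} {p : ℝ × ℝ} (hU : DifferentiableAt ℝ U p)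
    (hV : DifferentiableAt ℝ V p) : dDot R (U + V) p = dDot R U p + dDot R V p := by
  rw [differentiableAt_pi] at hU hV
  have hs : vds (U + V) p = vds U p + vds V p := funext fun i => by
    have := (hU i).fun_add (hV i)
    simp only [vds, Pi.add_apply, pds_eq_fderiv this, pds_eq_fderiv (hU i), pds_eq_fderiv (hV i),
      fderiv_fun_add (hU i) (hV i), _root_.add_apply]
  have ht : vdt (U + V) p = vdt U p + vdt V p := funext fun i => by
    have := (hU i).fun_add (hV i)
    simp only [vdt, Pi.add_apply, pdt_eq_fderiv this, pdt_eq_fderiv (hU i), pdt_eq_fderiv (hV i),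
      fderiv_fun_add (hU i) (hV i), _root_.add_apply]
  rw [dDot, hs, ht]
  funext i
  fin_cases i <;> simp [dDot, dot3] <;> ring

theorem IsSmoothPeriodic.rotateFst {α β : ℝ → ℝ} (hα : IsSmoothPeriodic α)
    (hβ : IsSmoothPeriodic β) : IsSmoothPeriodic (rotateFst α β) :=
  (cos.mul hα).sub (sin.mul hβ)

theorem IsSmoothPeriodic.rotateSnd {α β : ℝ → ℝ} (hα : IsSmoothPeriodic α)
    (hβ : IsSmoothPeriodic β) : IsSmoothPeriodic (rotateSnd α β) :=
  (sin.mul hα).add (cos.mul hβ)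

theorem deriv_rotateFst {α β : ℝ → ℝ} (hα : IsSmoothPeriodic α) (hβ : IsSmoothPeriodic β)
    (x : ℝ) : deriv (rotateFst α β) x =
      -Real.sin x * α x + Real.cos x * deriv α x - (Real.cos x * β x + Real.sin x * deriv β x) :=
  (((Real.hasDerivAt_cos x).mul (hα.hasDerivAt x)).sub
    ((Real.hasDerivAt_sin x).mul (hβ.hasDerivAt x))).deriv

theorem deriv_rotateSnd {α β : ℝ → ℝ} (hα : IsSmoothPeriodic α) (hβ : IsSmoothPeriodic β)
    (x : ℝ) : deriv (rotateSnd α β) x =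
      Real.cos x * α x + Real.sin x * deriv α x + (-Real.sin x * β x + Real.cos x * deriv β x) :=
  (((Real.hasDerivAt_sin x).mul (hα.hasDerivAt x)).add
    ((Real.hasDerivAt_cos x).mul (hβ.hasDerivAt x))).deriv

section LogPolarSystem

variable (h : LogPolarSystem m μ P e₁ e₂ e₃ f₀ α₀ β₀ f₁ α₁ β₁)
include h

theorem LogPolarSystem.radial (L x : ℝ) :
    (μ + m - 1) * (α₁ x + L * α₀ x) + α₀ x + m * P x * (μ * (f₁ x + L * f₀ x) + f₀ x) = e₁ x := by
  have h₀ := h.leading.radial x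
  have h₁ := h.remainder.radial x
  simp only [Pi.sub_apply, Pi.add_apply, Pi.smul_apply, Pi.mul_apply, Pi.zero_apply,
    smul_eq_mul] at h₀ h₁
  linear_combination h₁ + L * h₀

theorem LogPolarSystem.mixed (L x : ℝ) :
    (μ + m - 2) * (β₁ x + L * β₀ x) + β₀ x + (deriv α₁ x + L * deriv α₀ x) +
      m * P x * (deriv f₁ x + L * deriv f₀ x) +
      deriv P x * (μ * (f₁ x + L * f₀ x) + f₀ x) = e₂ x := by
  have h₀ := h.leading.mixed x
  have h₁ := h.remainder.mixed x
  simp only [Pi.sub_apply, Pi.add_apply, Pi.mul_apply, Pi.zero_apply] at h₀ h₁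
  linear_combination h₁ + L * h₀

theorem LogPolarSystem.angular (L x : ℝ) :
    deriv β₁ x + L * deriv β₀ x + (α₁ x + L * α₀ x) +
      deriv P x * (deriv f₁ x + L * deriv f₀ x) = e₃ x := by
  have h₀ := h.leading.angular x
  rw [Pi.zero_apply] at h₀
  linear_combination h.remainder.angular x + L * h₀

theorem LogPolarSystem.isPolarForm_dDot (hz : IsLogHomogeneous m P 0 z)
    (hu : IsLogHomogeneous (μ + m - 1) (rotateFst α₁ β₁) (rotateFst α₀ β₀) u)
    (hv : IsLogHomogeneous (μ + m - 1) (rotateSnd α₁ β₁) (rotateSnd α₀ β₀) v)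
    (hw : IsLogHomogeneous μ f₁ f₀ w) :
    IsPolarForm (μ + m - 2) e₁ e₂ e₃ (dDot (graphMap z) fun p => ![u p, v p, w p]) :=
  fun r hr θ => by
  have hpow : r ^ (μ + m - 2) = r ^ (m - 1) * r ^ (μ - 1) := by
    rw [← Real.rpow_add hr]
    ring_nf
  have hα₀ := h.leading.α_smooth
  have hβ₀ := h.leading.β_smooth
  have hα₁ := h.remainder.α_smooth
  have hβ₁ := h.remainder.β_smooth
  rw [dDot_graphMap_vec, hu.pds.apply r hr, hu.pdt.apply r hr, hv.pds.apply r hr,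
    hv.pdt.apply r hr, hw.pds.apply r hr, hw.pdt.apply r hr, hz.pds.apply r hr,
    hz.pdt.apply r hr, show μ + m - 1 - 1 = μ + m - 2 by ring, hpow, Matrix.smul_vec3]
  simp only [angularDs, angularDt, Pi.add_apply, Pi.sub_apply, Pi.mul_apply, Pi.smul_apply,
    smul_eq_mul, deriv_rotateFst hα₁ hβ₁, deriv_rotateFst hα₀ hβ₀, deriv_rotateSnd hα₁ hβ₁,
    deriv_rotateSnd hα₀ hβ₀, deriv_zero, Pi.zero_apply]
  simp only [rotateFst, rotateSnd, Pi.add_apply, Pi.sub_apply, Pi.mul_apply]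
  have radial := h.radial (Real.log r) θ
  have mixed := h.mixed (Real.log r) θ
  have angular := h.angular (Real.log r) θ
  generalize Real.cos θ = c
  generalize Real.sin θ = s
  refine Matrix.vec3_eq ?_ ?_ ?_
  · linear_combination r ^ (m - 1) * r ^ (μ - 1) *
      (c ^ 2 * radial - c * s * mixed + s ^ 2 * angular)
  · linear_combination r ^ (m - 1) * r ^ (μ - 1) *
      (2 * c * s * radial + (c ^ 2 - s ^ 2) * mixed - 2 * c * s * angular)
  · linear_combination r ^ (m - 1) * r ^ (μ - 1) *
      (s ^ 2 * radial + c * s * mixed + c ^ 2 * angular)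

end LogPolarSystem

theorem contDiff_vec {k : ℕ} (hu : ContDiff ℝ k u) (hv : ContDiff ℝ k v) (hw : ContDiff ℝ k w) :
    ContDiff ℝ k fun p => ![u p, v p, w p] := by
  refine contDiff_pi.2 fun i => ?_
  fin_cases i
  exacts [hu, hv, hw]

theorem rotateFst_zero : rotateFst 0 0 = 0 := by simp [rotateFst]

theorem rotateSnd_zero : rotateSnd 0 0 = 0 := by simp [rotateSnd]

theorem exists_contDiff_isLogHomogeneous {G : ℝ → ℝ} (hF : IsSmoothPeriodic F)
    (hG : IsSmoothPeriodic G) (k : ℕ) (hk : k < a) :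
    ∃ φ, IsLogHomogeneous a F G φ ∧ φ 0 = 0 ∧ ContDiff ℝ k φ := by
  have ha : 0 < a := k.cast_nonneg.trans_lt hk
  obtain ⟨φ, hφ, h₀⟩ := exists_isLogHomogeneous ha.ne' hF hG
  exact ⟨φ, hφ, h₀, hφ.contDiff k h₀ hk⟩

theorem LogPolarSystem.exists_contDiff_isPolarForm
    (h : LogPolarSystem m μ P e₁ e₂ e₃ f₀ α₀ β₀ f₁ α₁ β₁) (hz : IsLogHomogeneous m P 0 z)
    (hm : 1 < m) (k : ℕ) (hk : k < μ) :
    ∃ u v w, IsLogHomogeneous (μ + m - 1) (rotateFst α₁ β₁) (rotateFst α₀ β₀) u ∧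
      IsLogHomogeneous (μ + m - 1) (rotateSnd α₁ β₁) (rotateSnd α₀ β₀) v ∧
      IsLogHomogeneous μ f₁ f₀ w ∧ w 0 = 0 ∧ ContDiff ℝ k (fun p => ![u p, v p, w p]) ∧
      IsPolarForm (μ + m - 2) e₁ e₂ e₃ (dDot (graphMap z) fun p => ![u p, v p, w p]) := by
  have hk' : (k : ℝ) < μ + m - 1 := by linarith
  obtain ⟨u, hu, -, hu_diff⟩ := exists_contDiff_isLogHomogeneous
    (h.remainder.α_smooth.rotateFst h.remainder.β_smooth)
    (h.leading.α_smooth.rotateFst h.leading.β_smooth) k hk'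
  obtain ⟨v, hv, -, hv_diff⟩ := exists_contDiff_isLogHomogeneous
    (h.remainder.α_smooth.rotateSnd h.remainder.β_smooth)
    (h.leading.α_smooth.rotateSnd h.leading.β_smooth) k hk'
  obtain ⟨w, hw, hw₀, hw_diff⟩ :=
    exists_contDiff_isLogHomogeneous h.remainder.f_smooth h.leading.f_smooth k hk
  exact ⟨u, v, w, hu, hv, hw, hw₀, contDiff_vec hu_diff hv_diff hw_diff,
    h.isPolarForm_dDot hz hu hv hw⟩

theorem IsHomogeneousForm.exists_contDiff_dDot_eq {p : ℝ → ℝ} {d : ℝ} {Q : ℝ × ℝ → Fin 3 → ℝ}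
    (hQ : IsHomogeneousForm d Q) (hp : IsSmoothPeriodic p) (hm : 1 < m)
    (hB : ∀ x, 0 ≤ curvatureCoeff m p x) (hz : IsLogHomogeneous m (expProfile m p) 0 z)
    (k : ℕ) (hk : k + m < d + 2) (hd : m ≤ d + 1) :
    ∃ U, ContDiff ℝ k U ∧ ∀ p ≠ 0, dDot (graphMap z) U p = Q p := by
  obtain ⟨e₁, e₂, e₃, he₁, he₂, he₃, hQ⟩ := hQ
  obtain ⟨f₀, α₀, β₀, f₁, α₁, β₁, h⟩ := exists_logPolarSystem_expProfile (μ := d - m + 2) hp hm hB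
    (by linarith) (by linarith) he₁ he₂ he₃
  obtain ⟨u, v, w, -, -, -, -, hU, hform⟩ := h.exists_contDiff_isPolarForm hz hm k (by linarith)
  rw [show d - m + 2 + m - 2 = d by ring] at hform
  exact ⟨_, hU, fun p => hform.eq_of_ne_zero hQ⟩

theorem IsPolarForm.dDot_eq_zero {d : ℝ} {R U : ℝ × ℝ → Fin 3 → ℝ}
    (h : IsPolarForm d 0 0 0 (dDot R U)) {p : ℝ × ℝ} (hp : p ≠ 0) : dDot R U p = 0 :=
  h.eq_of_ne_zero (Q' := 0) (fun r _ θ => by ext i; fin_cases i <;> simp) hp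

theorem exists_contDiff_dDot_eq_zero {p : ℝ → ℝ} (hp : IsSmoothPeriodic p) (hm : 1 < m)
    (hB : ∀ x, 0 ≤ curvatureCoeff m p x) (hz : IsLogHomogeneous m (expProfile m p) 0 z)
    (k : ℕ) (N : ℝ) (hN : k < N) : ∃ l ≥ N, ∃ f ≠ 0, ∃ U V, ∃ u v w,
      IsLogHomogeneous (l + m - 1) U 0 u ∧ IsLogHomogeneous (l + m - 1) V 0 v ∧
      IsLogHomogeneous l f 0 w ∧ w 0 = 0 ∧ ContDiff ℝ k (fun p => ![u p, v p, w p]) ∧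
      ∀ p ≠ 0, dDot (graphMap z) (fun p => ![u p, v p, w p]) p = 0 := by
  obtain ⟨l, hl, f, hf, α, β, h⟩ := exists_polarSystem_zero_expProfile hp hm hB N
  obtain ⟨u, v, w, hu, hv, hw, hw₀, hU, hform⟩ :=
    h.logPolarSystem.exists_contDiff_isPolarForm hz hm k (hN.trans_le hl)
  rw [rotateFst_zero] at hu
  rw [rotateSnd_zero] at hv
  exact ⟨l, hl, f, hf, _, _, u, v, w, hu, hv, hw, hw₀, hU, fun p => hform.dDot_eq_zero⟩

theorem exists_contDiff_dDot_eq_neg_dDot_self {p : ℝ → ℝ} (hp : IsSmoothPeriodic p) (hm : 1 < m)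
    (hB : ∀ x, 0 ≤ curvatureCoeff m p x) (hz : IsLogHomogeneous m (expProfile m p) 0 z)
    {l : ℝ} {f U V : ℝ → ℝ} (hu : IsLogHomogeneous (l + m - 1) U 0 u)
    (hv : IsLogHomogeneous (l + m - 1) V 0 v) (hw : IsLogHomogeneous l f 0 w)
    (k : ℕ) (hk : 1 ≤ k) (hl : k + m ≤ l) : ∃ U₂, ContDiff ℝ k U₂ ∧
      ∀ p ≠ 0, dDot (graphMap z) U₂ p =
        -dDot (fun p => ![u p, v p, w p]) (fun p => ![u p, v p, w p]) p := by
  have hk' : (1 : ℝ) ≤ k := by exact_mod_cast hk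
  -- `du² + dv²` and `dw²` have different degrees, so they are corrected separately.
  obtain ⟨A, hA_diff, hA⟩ := (hu.isHomogeneousForm_dSq.add
    hv.isHomogeneousForm_dSq).neg.exists_contDiff_dDot_eq hp hm hB hz k (by linarith) (by linarith)
  obtain ⟨B, hB_diff, hB⟩ := hw.isHomogeneousForm_dSq.neg.exists_contDiff_dDot_eq hp hm hB hz k
    (by linarith) (by linarith)
  have hk₀ : (k : WithTop ℕ∞) ≠ 0 := by exact_mod_cast (zero_lt_one.trans_le hk).ne'
  refine ⟨A + B, hA_diff.add hB_diff, fun p hp₀ => ?_⟩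
  rw [dDot_add_right (hA_diff.differentiable hk₀ p) (hB_diff.differentiable hk₀ p), hA p hp₀,
    hB p hp₀, dDot_self_vec, Pi.neg_apply, Pi.neg_apply, ← neg_add, ← Pi.add_apply]

theorem not_isTrivialField {l : ℝ} {f : ℝ → ℝ} (hl : 1 < l) (hf : f ≠ 0)
    (hw : IsLogHomogeneous l f 0 w) (hw₀ : w 0 = 0) :
    ¬ ∃ A B : Fin 3 → ℝ, ∀ p, ![u p, v p, w p] = cross3 A (graphMap z p) + B := by
  rintro ⟨A, B, hAB⟩
  obtain ⟨θ, hθ⟩ := Function.ne_iff.1 hf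
  have hw_affine : ∀ p : ℝ × ℝ, w p = A 0 * p.2 - A 1 * p.1 + B 2 := fun p => by
    simpa [cross3, graphMap] using congrFun (hAB p) 2
  have hB : B 2 = 0 := by simpa [hw₀] using (hw_affine 0).symm
  have h₁ := hw_affine (1 * Real.cos θ, 1 * Real.sin θ)
  have h₂ := hw_affine (2 * Real.cos θ, 2 * Real.sin θ)
  rw [hw.apply 1 one_pos, Real.one_rpow, Pi.zero_apply] at h₁
  rw [hw.apply 2 two_pos, Pi.zero_apply] at h₂
  have hpow : (2 : ℝ) < 2 ^ l := by
    simpa using Real.rpow_lt_rpow_of_exponent_lt one_lt_two hl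
  have hzero : ((2 : ℝ) ^ l - 2) * f θ = 0 := by linear_combination h₂ - 2 * h₁ - hB
  exact (mul_ne_zero (sub_pos.2 hpow).ne' hθ) hzero

end BendingFields

section SecondOrderBending

open Function

/-- `R + 2ε U₁ + 2ε² U₂` is an infinitesimal bending of order two of `R`, away from the origin. -/
def IsSecondOrderBending (R U₁ U₂ : ℝ × ℝ → Fin 3 → ℝ) : Prop :=
  ∀ p ≠ 0, dDot R U₁ p = 0 ∧ dDot R U₂ p = -dDot U₁ U₁ p

theorem isSecondOrderBending_iff {R U₁ U₂ : ℝ × ℝ → Fin 3 → ℝ} :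
    IsSecondOrderBending R U₁ U₂ ↔ ∀ p : ℝ × ℝ, p ≠ 0 →
      (dot3 (vds R p) (vds U₁ p) = 0 ∧
        dot3 (vds R p) (vdt U₁ p) + dot3 (vdt R p) (vds U₁ p) = 0 ∧
        dot3 (vdt R p) (vdt U₁ p) = 0) ∧
      (dot3 (vds R p) (vds U₂ p) = -dot3 (vds U₁ p) (vds U₁ p) ∧
        dot3 (vds R p) (vdt U₂ p) + dot3 (vdt R p) (vds U₂ p) =
          -(dot3 (vds U₁ p) (vdt U₁ p) + dot3 (vdt U₁ p) (vds U₁ p)) ∧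
        dot3 (vdt R p) (vdt U₂ p) = -dot3 (vdt U₁ p) (vdt U₁ p)) := by
  simp only [IsSecondOrderBending, dDot, funext_iff, Fin.forall_fin_succ]
  simp

theorem nonneg_of_periodic_of_nonneg_off_finite {g : ℝ → ℝ} {c : ℝ} (hg : Continuous g)
    (hper : Periodic g c) (hc : 0 < c) {T : Set ℝ} (hT : T.Finite)
    (h : ∀ x ∈ Set.Ico 0 c, x ∉ T → 0 ≤ g x) (x : ℝ) : 0 ≤ g x := by
  have hclosed : IsClosed {y | 0 ≤ g y} := isClosed_le continuous_const hg
  have hdense : Set.Ioo 0 c ⊆ closure (Set.Ioo 0 c ∩ Tᶜ) :=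
    (hT.countable.dense_compl ℝ).open_subset_closure_inter isOpen_Ioo
  have hIcc : Set.Icc 0 c ⊆ {y | 0 ≤ g y} := by
    rw [← closure_Ioo hc.ne]
    exact closure_minimal (hdense.trans (closure_minimal
      (fun y hy => h y (Set.Ioo_subset_Ico_self hy.1) hy.2) hclosed)) hclosed
  obtain ⟨y, hy, hxy⟩ := hper.exists_mem_Ico₀ hc x
  exact hxy ▸ hIcc (Set.Ico_subset_Icc_self hy)

theorem curvature_nonneg_of_nonneg_off_finite {P : ℝ → ℝ} (hP : IsSmoothPeriodic P) (m : ℝ)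
    {T : Set ℝ} (hT : T.Finite) (h : ∀ θ ∈ Set.Ico (0 : ℝ) (2 * Real.pi), θ ∉ T →
      0 ≤ m ^ 2 * P θ ^ 2 + m * P θ * deriv (deriv P) θ - (m - 1) * deriv P θ ^ 2) (θ : ℝ) :
    0 ≤ m ^ 2 * P θ ^ 2 + m * P θ * deriv (deriv P) θ - (m - 1) * deriv P θ ^ 2 := by
  have hcont := hP.contDiff.continuous
  have hcont' := hP.deriv.contDiff.continuous
  have hcont'' := hP.deriv.deriv.contDiff.continuous
  refine nonneg_of_periodic_of_nonneg_off_finite (c := 2 * Real.pi) (by fun_prop) (fun x => ?_)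
    Real.two_pi_pos hT h θ
  rw [hP.periodic, hP.deriv.periodic, hP.deriv.deriv.periodic]

theorem homogeneous_graph_second_order_bending_general {m : ℝ} (hm : 1 < m) {P : ℝ → ℝ}
    (hP : IsSmoothPeriodic P) (hpos : ∀ θ, 0 < P θ) {z : ℝ × ℝ → ℝ}
    (hz : ∀ r : ℝ, 0 < r → ∀ θ : ℝ, z (r * Real.cos θ, r * Real.sin θ) = r ^ m * P θ)
    (hcurv : ∀ θ, 0 ≤ m ^ 2 * P θ ^ 2 + m * P θ * deriv (deriv P) θ - (m - 1) * deriv P θ ^ 2)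
    (k : ℕ) :
    ∃ U₁ U₂ : ℝ × ℝ → Fin 3 → ℝ, ContDiff ℝ (k : ℕ∞) U₁ ∧ ContDiff ℝ (k : ℕ∞) U₂ ∧
      IsSecondOrderBending (graphMap z) U₁ U₂ ∧
      ¬ ∃ A B : Fin 3 → ℝ, ∀ p, U₁ p = cross3 A (graphMap z p) + B := by
  obtain ⟨p, hp, rfl⟩ := exists_isSmoothPeriodic_eq_expProfile hP hpos (by linarith : m ≠ 0)
  have hB : ∀ x, 0 ≤ curvatureCoeff m p x := fun x =>
    nonneg_of_mul_nonneg_right ((curvature_eq_mul_curvatureCoeff hp hm.ne' x).symm ▸ hcurv x)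
      (by have := hpos x; have := sub_pos.2 hm; positivity)
  have hz' : IsLogHomogeneous m (expProfile m p) 0 z :=
    ⟨hP, .const 0, fun r hr θ => by simp [hz r hr θ]⟩
  obtain ⟨l, hl, f, hf, U, V, u, v, w, hu, hv, hw, hw₀, hU₁_diff, hU₁⟩ :=
    exists_contDiff_dDot_eq_zero hp hm hB hz' (k + 1) (k + 1 + m) (by push_cast; linarith)
  obtain ⟨U₂, hU₂_diff, hU₂⟩ := exists_contDiff_dDot_eq_neg_dDot_self hp hm hB hz' hu hv hw (k + 1)
    (Nat.le_add_left 1 k) (by exact_mod_cast hl)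
  have hk : ((k : ℕ∞) : WithTop ℕ∞) ≤ (k + 1 : ℕ) := by exact_mod_cast Nat.le_succ k
  have hl₁ : 1 < l := by have : (0 : ℝ) ≤ k := k.cast_nonneg; linarith
  exact ⟨_, U₂, hU₁_diff.of_le hk, hU₂_diff.of_le hk, fun p hp₀ => ⟨hU₁ p hp₀, hU₂ p hp₀⟩,
    not_isTrivialField hl₁ hf hw hw₀⟩

end SecondOrderBending

/-- Theorem "Homogeneous1".
If the spectral quantities `b₁, b₂` of the graph of a homogeneous function of order `m ≥ 2`
with nonnegative curvature satisfy `b₁ − b₂ ∉ πℤ` and `(2m−1)b₁ − b₂ ∉ πℤ`, then for every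
`k` there is a nontrivial infinitesimal bending of order 2 with `C^k` bending fields. -/
theorem homogeneous_graph_second_order_bending
    (m : ℝ) (hm : 2 ≤ m)
    (P : ℝ → ℝ) (hP : ContDiff ℝ (⊤ : ℕ∞) P)
    (hper : ∀ θ, P (θ + 2 * Real.pi) = P θ) (hPpos : ∀ θ, 0 < P θ)
    (z : ℝ × ℝ → ℝ)
    (hz : ∀ r : ℝ, 0 < r → ∀ θ : ℝ, z (r * Real.cos θ, r * Real.sin θ) = r ^ m * P θ)
    (hzsm : ContDiffOn ℝ (⊤ : ℕ∞) z {p : ℝ × ℝ | p ≠ 0})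
    (hcurv : ∃ T : Finset ℝ, ∀ θ ∈ Set.Ico (0 : ℝ) (2 * Real.pi), θ ∉ T →
      0 < m ^ 2 * P θ ^ 2 + m * P θ * deriv (deriv P) θ - (m - 1) * (deriv P θ) ^ 2)
    (Zss Zst Ztt : ℝ → ℝ)
    (hZss : ∀ θ, Zss θ = pds (pds z) (Real.cos θ, Real.sin θ))
    (hZst : ∀ θ, Zst θ = pdt (pds z) (Real.cos θ, Real.sin θ))
    (hZtt : ∀ θ, Ztt θ = pdt (pdt z) (Real.cos θ, Real.sin θ))
    (b c1 c2 : ℝ → ℝ)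
    (hb : ∀ θ, b θ = Real.sqrt (Ztt θ * Zss θ - Zst θ ^ 2) / ((m ^ 2 - m) * P θ))
    (hc1 : ∀ θ, c1 θ = Zst θ / Real.sqrt (Ztt θ * Zss θ - Zst θ ^ 2)
        * deriv (fun τ => Real.log (Ztt τ)) θ)
    (hc2 : ∀ θ, c2 θ = Zst θ / Real.sqrt (Ztt θ * Zss θ - Zst θ ^ 2)
        * deriv (fun τ => Real.log (Zss τ)) θ)
    (hc1L1 : MeasureTheory.IntegrableOn c1 (Set.Icc 0 (2 * Real.pi)))
    (hc2L1 : MeasureTheory.IntegrableOn c2 (Set.Icc 0 (2 * Real.pi)))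
    (b1 b2 : ℝ)
    (hb1 : b1 = ∫ θ in (0 : ℝ)..(2 * Real.pi), b θ)
    (hb2 : b2 = -(1 / 4) * ∫ θ in (0 : ℝ)..(2 * Real.pi), (c1 θ - c2 θ))
    (hnr1 : ¬ ∃ a : ℤ, b1 - b2 = Real.pi * a)
    (hnr2 : ¬ ∃ a : ℤ, (2 * m - 1) * b1 - b2 = Real.pi * a) :
    ∀ k : ℕ, ∃ U1 U2 : ℝ × ℝ → Fin 3 → ℝ,
      ContDiff ℝ (k : ℕ∞) U1 ∧ ContDiff ℝ (k : ℕ∞) U2 ∧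
      (∀ p : ℝ × ℝ, p ≠ 0 →
        (dot3 (vds (fun q : ℝ × ℝ => ![q.1, q.2, z q]) p) (vds U1 p) = 0 ∧
         dot3 (vds (fun q : ℝ × ℝ => ![q.1, q.2, z q]) p) (vdt U1 p)
           + dot3 (vdt (fun q : ℝ × ℝ => ![q.1, q.2, z q]) p) (vds U1 p) = 0 ∧
         dot3 (vdt (fun q : ℝ × ℝ => ![q.1, q.2, z q]) p) (vdt U1 p) = 0) ∧
        (dot3 (vds (fun q : ℝ × ℝ => ![q.1, q.2, z q]) p) (vds U2 p)
           = -(dot3 (vds U1 p) (vds U1 p)) ∧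
         dot3 (vds (fun q : ℝ × ℝ => ![q.1, q.2, z q]) p) (vdt U2 p)
           + dot3 (vdt (fun q : ℝ × ℝ => ![q.1, q.2, z q]) p) (vds U2 p)
           = -(dot3 (vds U1 p) (vdt U1 p) + dot3 (vdt U1 p) (vds U1 p)) ∧
         dot3 (vdt (fun q : ℝ × ℝ => ![q.1, q.2, z q]) p) (vdt U2 p)
           = -(dot3 (vdt U1 p) (vdt U1 p)))) ∧
      ¬ ∃ (A B : Fin 3 → ℝ), ∀ p : ℝ × ℝ, U1 p = cross3 A ![p.1, p.2, z p] + B := by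
  intro k
  have hP' : IsSmoothPeriodic P := ⟨hP, hper⟩
  obtain ⟨T, hT⟩ := hcurv
  have hcurv' :=
    curvature_nonneg_of_nonneg_off_finite hP' m T.finite_toSet fun θ hθ hθT => (hT θ hθ hθT).le
  obtain ⟨U₁, U₂, hU₁, hU₂, hbend, htriv⟩ :=
    homogeneous_graph_second_order_bending_general (by linarith) hP' hPpos hz hcurv' k
  exact ⟨U₁, U₂, hU₁, hU₂, isSecondOrderBending_iff.1 hbend, htriv⟩
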